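/- Let k ≥ 0 be an integer and let G be a simple graph of order n ≥ max{6k+17, (k+4)(k+5)/2} with e(G) ≥ C(n−k−2, 2) + C(k+3, 2). Then G is weakly pancyclic with girth 3. Moreover, if G contains no cycle of length n−k, then one of the following holds: (a) G is a subgraph of some member of the family F_{n,k+1}; (b) G is isomorphic to L_{n,k+2} = K_1 ∨ (K_{n−k−3} + K_{k+2}); (c) k = 0 and G is a subgraph of Γ_{n,2} = K_2 ∨ (K_{n−4} + 2K_1); (d) k = 1 and G is isomorphic to Γ_{n,3} = K_2 ∨ (K_{n−5} + 3K_1). -/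

import Mathlib

open SimpleGraph

/-- `G` contains a cycle of length `l`. -/
def HasCycleLen {V : Type} (G : SimpleGraph V) (l : ℕ) : Prop :=
  ∃ (v : V) (c : G.Walk v v), c.IsCycle ∧ c.length = l

/-- The circumference of `G`: the length of a longest cycle. -/
noncomputable def circumference {V : Type} (G : SimpleGraph V) : ℕ :=
  sSup {l | HasCycleLen G l}

/-- `G` is weakly pancyclic with girth 3: it contains a cycle of every length `l`
with `3 ≤ l ≤ c(G)`. -/
def WeaklyPancyclic3 {V : Type} (G : SimpleGraph V) : Prop :=
  HasCycleLen G 3 ∧ ∀ l : ℕ, 3 ≤ l → l ≤ circumference G → HasCycleLen G l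

/-- The number of edges of `G`. -/
noncomputable def edgeCount {V : Type} (G : SimpleGraph V) : ℕ :=
  Nat.card G.edgeSet

/-- The degree of `v` in `G`. -/
noncomputable def degCount {V : Type} (G : SimpleGraph V) (v : V) : ℕ :=
  Nat.card (G.neighborSet v)

/-- The spectral radius of `G`: the largest eigenvalue of the adjacency matrix. -/
noncomputable def specRad {V : Type} [Finite V] (G : SimpleGraph V) : ℝ :=
  letI := Fintype.ofFinite V
  letI := Classical.decEq V
  letI := Classical.decRel G.Adj
  sSup (spectrum ℝ (G.adjMatrix ℝ))

/-- The signless Laplacian spectral radius of `G`: the largest eigenvalue of `D(G) + A(G)`. -/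
noncomputable def qSpecRad {V : Type} [Finite V] (G : SimpleGraph V) : ℝ :=
  letI := Fintype.ofFinite V
  letI := Classical.decEq V
  letI := Classical.decRel G.Adj
  sSup (spectrum ℝ (Matrix.diagonal (fun v => (degCount G v : ℝ)) + G.adjMatrix ℝ))

/-- `L_{n,k} = K_1 ∨ (K_{n-k-1} + K_k)`: vertex `0` is the common vertex of a clique on
the `n - k` vertices `{0, …, n-k-1}` and a clique on the `k+1` vertices `{0} ∪ {n-k, …, n-1}`. -/
def Lgraph (n k : ℕ) : SimpleGraph (Fin n) :=
  SimpleGraph.fromRel (fun u v =>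
    u.val = 0 ∨ v.val = 0 ∨ (u.val < n - k ∧ v.val < n - k) ∨
      (n - k ≤ u.val ∧ n - k ≤ v.val))

/-- `Γ_{n,t} = K_2 ∨ (K_{n-2-t} + t·K_1)`: vertices `0,1` are joined to everything,
vertices `2, …, n-t-1` form a clique, and vertices `n-t, …, n-1` are independent. -/
def GammaGraph (n t : ℕ) : SimpleGraph (Fin n) :=
  SimpleGraph.fromRel (fun u v =>
    u.val < 2 ∨ v.val < 2 ∨ (u.val < n - t ∧ v.val < n - t))

/-- `F` is a member of the family `F_{n,k}`: there is a clique `K` on `n - k` vertices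
such that each connected component of `F - K` is a clique all of whose vertices are
adjacent to one single common vertex of `K` and to no other vertex of `K`. -/
def MemF (n k : ℕ) (F : SimpleGraph (Fin n)) : Prop :=
  ∃ K : Finset (Fin n), K.card = n - k ∧ F.IsClique (↑K : Set (Fin n)) ∧
    (∀ u v : ({x : Fin n | x ∉ K} : Set (Fin n)),
      (F.induce {x : Fin n | x ∉ K}).Reachable u v → (u = v ∨ F.Adj u.1 v.1)) ∧
    (∀ u : ({x : Fin n | x ∉ K} : Set (Fin n)), ∃! w : Fin n, w ∈ K ∧ F.Adj u.1 w) ∧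
    (∀ u v : ({x : Fin n | x ∉ K} : Set (Fin n)),
      (F.induce {x : Fin n | x ∉ K}).Reachable u v →
        ∀ w ∈ K, F.Adj u.1 w → F.Adj v.1 w)

/-- `G` is a subgraph of `H` (up to relabelling): there is an injective graph
homomorphism from `G` to `H`. -/
def IsSubgraphOf {n : ℕ} (G H : SimpleGraph (Fin n)) : Prop :=
  ∃ f : G →g H, Function.Injective f

section Aux
open Classical Finset

/-- `HP G W p q`: there is a path in `G` from `p` to `q` with vertex set exactly `W`. -/
inductive HP {V : Type} (G : SimpleGraph V) : Finset V → V → V → Prop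
  | single (v : V) : HP G {v} v v
  | cons {W : Finset V} {p q : V} (u : V) (h : HP G W p q) (hu : u ∉ W) (ha : G.Adj u p) :
      HP G (insert u W) u q

namespace HP
variable {V : Type} {G : SimpleGraph V}

lemma left_mem {W : Finset V} {p q : V} (h : HP G W p q) : p ∈ W := by
  cases h <;> simp

lemma right_mem {W : Finset V} {p q : V} (h : HP G W p q) : q ∈ W := by
  induction h <;> simp_all

lemma congr_set {W W' : Finset V} {p q : V} (h : HP G W p q) (e : W = W') : HP G W' p q := e ▸ h

lemma join {W D : Finset V} {p q u v : V} (h : HP G W p q) (h' : HP G D u v)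
    (hd : Disjoint W D) (ha : G.Adj q u) : HP G (W ∪ D) p v := by
  induction h with
  | single w =>
    exact (HP.cons w h' (by simpa using hd) ha).congr_set (by ext; simp)
  | cons w h hu hw ih =>
    rw [Finset.disjoint_insert_left] at hd
    exact (HP.cons w (ih hd.2 ha) (by simp [hu, hd.1]) hw).congr_set (by ext; simp)

lemma symm {W : Finset V} {p q : V} (h : HP G W p q) : HP G W q p := by
  induction h with
  | single w => exact HP.single w
  | cons w h hu hw ih =>
    exact (ih.join (HP.single w) (by simpa using hu) hw.symm).congr_set (by ext; simp)

lemma mono {G' : SimpleGraph V} {W : Finset V} {p q : V} (h : HP G W p q)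
    (hG : ∀ x ∈ W, ∀ y ∈ W, G.Adj x y → G'.Adj x y) : HP G' W p q := by
  induction h with
  | single w => exact HP.single w
  | cons w h hu hw ih =>
    refine HP.cons w (ih fun x hx y hy => hG x (by simp [hx]) y (by simp [hy])) hu ?_
    exact hG _ (by simp) _ (by simp [h.left_mem]) hw

lemma exists_fun {W : Finset V} {p q : V} (h : HP G W p q) :
    ∃ (m : ℕ) (f : ℕ → V), W.card = m + 1 ∧ f 0 = p ∧ f m = q ∧
      (∀ i < m, G.Adj (f i) (f (i+1))) ∧ (∀ i ≤ m, ∀ j ≤ m, f i = f j → i = j) ∧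
      (∀ x, x ∈ W ↔ ∃ i ≤ m, f i = x) := by
  induction h with
  | single w => exact ⟨0, fun _ => w, by simp, rfl, rfl, by simp, by simp,
      by simp [eq_comm]⟩
  | @cons W p q w h hu hw ih =>
    obtain ⟨m, f, hc, h0, hm, ha, hi, hW⟩ := ih
    refine ⟨m+1, fun i => Nat.casesOn i w f, by simp [hu, hc], rfl, hm, ?_, ?_, ?_⟩
    · rintro (_|i) hi
      · simpa [h0] using hw
      · exact ha i (by omega)
    · have key : ∀ j ≤ m, w ≠ f j := fun j hj e => hu ((hW w).2 ⟨j, hj, e.symm⟩)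
      rintro (_|i) h1 (_|j) h2 e
      · rfl
      · exact absurd e (key j (by omega))
      · exact absurd e.symm (key i (by omega))
      · simpa using hi i (by omega) j (by omega) e
    · intro x
      simp only [Finset.mem_insert, hW]
      constructor
      · rintro (rfl | ⟨i, h1, h2⟩)
        · exact ⟨0, by omega, rfl⟩
        · exact ⟨i+1, by omega, h2⟩
      · rintro ⟨_|i, h1, h2⟩
        · exact Or.inl h2.symm
        · exact Or.inr ⟨i, by omega, h2⟩

/-- Segments of an indexed path. -/
lemma seg {f : ℕ → V} {m : ℕ}
    (hi : ∀ i ≤ m, ∀ j ≤ m, f i = f j → i = j) (a b : ℕ) (hab : a ≤ b) (hb : b ≤ m)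
    (ha : ∀ i, a ≤ i → i < b → G.Adj (f i) (f (i+1))) :
    HP G ((Finset.Icc a b).image f) (f a) (f b) := by
  induction b, hab using Nat.le_induction with
  | base => simpa using HP.single (f a)
  | succ b hab ih =>
    refine ((ih (by omega) fun i h1 h2 => ha i h1 (by omega)).join (HP.single (f (b+1))) ?_
      (ha b hab (by omega))).congr_set ?_
    · simp only [Finset.disjoint_singleton_right, Finset.mem_image, Finset.mem_Icc, not_exists]
      rintro x ⟨hx, e⟩
      have := hi x (by omega) (b+1) hb e
      omega
    · ext x
      simp only [Finset.mem_union, Finset.mem_image, Finset.mem_Icc, Finset.mem_singleton]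
      constructor
      · rintro (⟨i, h1, h2⟩ | rfl)
        · exact ⟨i, by omega, h2⟩
        · exact ⟨b+1, by omega, rfl⟩
      · rintro ⟨i, h1, h2⟩
        rcases Nat.lt_or_ge b i with h | h
        · right; rw [← h2]; congr 1; omega
        · left; exact ⟨i, by omega, h2⟩

lemma seg_disj {f : ℕ → V} {m : ℕ}
    (hi : ∀ i ≤ m, ∀ j ≤ m, f i = f j → i = j) (a b c d : ℕ) (hb : b < c) (hd : d ≤ m) :
    Disjoint ((Finset.Icc a b).image f) ((Finset.Icc c d).image f) := by
  rw [Finset.disjoint_left]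
  simp only [Finset.mem_image, Finset.mem_Icc, not_exists]
  rintro _ ⟨i, h1, rfl⟩ j ⟨h2, e⟩
  have := hi j (by omega) i (by omega) e
  omega

lemma seg_card {f : ℕ → V} {m : ℕ}
    (hi : ∀ i ≤ m, ∀ j ≤ m, f i = f j → i = j) (a b : ℕ) (hb : b ≤ m) :
    ((Finset.Icc a b).image f).card = b + 1 - a := by
  rw [Finset.card_image_of_injOn, Nat.card_Icc]
  intro i h1 j h2 e
  simp at h1 h2
  exact hi i (by omega) j (by omega) e

lemma of_walk {u v : V} (w : G.Walk u v) (hw : w.IsPath) : HP G w.support.toFinset u v := by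
  induction w with
  | nil => simpa using HP.single _
  | cons h p ih =>
    rw [SimpleGraph.Walk.cons_isPath_iff] at hw
    simpa using HP.cons _ (ih hw.1) (by simpa using hw.2) h

lemma exists_walk {W : Finset V} {p q : V} (h : HP G W p q) :
    ∃ w : G.Walk p q, w.IsPath ∧ w.support.toFinset = W := by
  induction h with
  | single w => exact ⟨.nil, by simp, by simp⟩
  | cons w h hu hw ih =>
    obtain ⟨p, hp, hs⟩ := ih
    refine ⟨.cons hw p, ?_, by simp [hs]⟩
    rw [SimpleGraph.Walk.cons_isPath_iff]
    refine ⟨hp, ?_⟩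
    rwa [← List.mem_toFinset, hs]

end HP

/-- There is a cycle with vertex set exactly `W`. -/
def HC {V : Type} (G : SimpleGraph V) (W : Finset V) : Prop :=
  3 ≤ W.card ∧ ∃ p q, HP G W p q ∧ G.Adj q p

lemma HC.hasCycleLen {V : Type} {G : SimpleGraph V} {W : Finset V} (h : HC G W) :
    HasCycleLen G W.card := by
  obtain ⟨h3, p, q, h, ha⟩ := h
  obtain ⟨w, hw, rfl⟩ := h.exists_walk
  have hc := List.toFinset_card_of_nodup hw.support_nodup
  rw [SimpleGraph.Walk.length_support] at hc
  refine ⟨q, .cons ha w, ?_, by simp [hc]⟩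
  rw [SimpleGraph.Walk.cons_isCycle_iff]
  refine ⟨hw, fun he => ?_⟩
  have : w.length = 1 := by
    rw [Sym2.eq_swap] at he
    exact hw.length_eq_one_of_mem_edges he
  omega

lemma HasCycleLen.exists_HC {V : Type} {G : SimpleGraph V} {l : ℕ} (h : HasCycleLen G l) :
    ∃ W, HC G W ∧ W.card = l := by
  obtain ⟨v, c, hc, hl⟩ := h
  cases c with
  | nil => simp at hc
  | cons h p =>
    have h3 := hc.three_le_length
    rw [SimpleGraph.Walk.cons_isCycle_iff] at hc
    have hcard := List.toFinset_card_of_nodup hc.1.support_nodup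
    rw [SimpleGraph.Walk.length_support] at hcard
    simp at h3 hl
    exact ⟨_, ⟨by omega, _, _, HP.of_walk p hc.1, h⟩, by omega⟩

section Posa
variable {V : Type}

/-- If adding edges `uw` to `G` creates a cycle on `W`, then `G` has a `u`-`w` path on `W`. -/
lemma HP_of_HC_add {G G' : SimpleGraph V} {W : Finset V} {u w : V}
    (hG : ∀ x y, G'.Adj x y → G.Adj x y ∨ (x = u ∧ y = w) ∨ (x = w ∧ y = u))
    (h : HC G' W) (hn : ¬ HC G W) : HP G W u w := by
  obtain ⟨h3, p, q, h, ha⟩ := h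
  obtain ⟨m, f, hc, h0, hm, hadj, hi, hW⟩ := h.exists_fun
  have hWi : (Finset.Icc 0 m).image f = W := by
    ext x; simp [hW]
  suffices h : ∃ a b, HP G W a b ∧ ((a = u ∧ b = w) ∨ (a = w ∧ b = u)) by
    obtain ⟨a, b, h, ⟨rfl, rfl⟩ | ⟨rfl, rfl⟩⟩ := h
    · exact h
    · exact h.symm
  by_cases hall : ∀ i < m, G.Adj (f i) (f (i+1))
  · have hp := (HP.seg hi 0 m (by omega) le_rfl fun i _ h => hall i h).congr_set hWi
    rcases hG _ _ ha with h | h | h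
    · exact absurd ⟨h3, _, _, hp, by rw [h0, hm]; exact h⟩ hn
    · exact ⟨_, _, hp, Or.inr (by rw [h0, hm]; exact h.symm)⟩
    · exact ⟨_, _, hp, Or.inl (by rw [h0, hm]; exact h.symm)⟩
  · push Not at hall
    obtain ⟨i, him, hna⟩ := hall
    have hp := (hG _ _ (hadj i him)).resolve_left hna
    have other : ∀ j < m, j ≠ i → G.Adj (f j) (f (j+1)) := by
      intro j hj hji
      by_contra hna'
      have hp' := (hG _ _ (hadj j hj)).resolve_left hna'
      rcases hp with ⟨e1, e2⟩ | ⟨e1, e2⟩ <;> rcases hp' with ⟨e3, e4⟩ | ⟨e3, e4⟩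
      · exact hji (hi j (by omega) i (by omega) (e3.trans e1.symm))
      · have a1 := hi j (by omega) (i+1) (by omega) (e3.trans e2.symm)
        have a2 := hi (j+1) (by omega) i (by omega) (e4.trans e1.symm)
        omega
      · have a1 := hi j (by omega) (i+1) (by omega) (e3.trans e2.symm)
        have a2 := hi (j+1) (by omega) i (by omega) (e4.trans e1.symm)
        omega
      · exact hji (hi j (by omega) i (by omega) (e3.trans e1.symm))
    have hwrap : G.Adj (f m) (f 0) := by
      by_contra hna'
      have hp' := (hG _ _ ha).resolve_left (by rw [← h0, ← hm]; exact hna')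
      rw [← h0, ← hm] at hp'
      rcases hp with ⟨e1, e2⟩ | ⟨e1, e2⟩ <;> rcases hp' with ⟨e3, e4⟩ | ⟨e3, e4⟩
      · have a1 := hi i (by omega) m (by omega) (e1.trans e3.symm)
        omega
      · have a1 := hi i (by omega) 0 (by omega) (e1.trans e4.symm)
        have a2 := hi (i+1) (by omega) m (by omega) (e2.trans e3.symm)
        omega
      · have a1 := hi i (by omega) 0 (by omega) (e1.trans e4.symm)
        have a2 := hi (i+1) (by omega) m (by omega) (e2.trans e3.symm)
        omega
      · have a1 := hi i (by omega) m (by omega) (e1.trans e3.symm)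
        omega
    have s1 := HP.seg (G := G) hi 0 i (by omega) (by omega) fun j _ h => other j (by omega) (by omega)
    have s2 := HP.seg (G := G) hi (i+1) m (by omega) (by omega)
      fun j _ h => other j (by omega) (by omega)
    refine ⟨_, _, (s1.symm.join s2.symm ?_ hwrap.symm).congr_set ?_, hp⟩
    · exact HP.seg_disj hi _ _ _ _ (by omega) le_rfl
    · rw [← hWi, ← Finset.image_union]
      congr 1
      ext; simp; omega

/-- the number of neighbours of `v` in `W` -/
noncomputable def nb (G : SimpleGraph V) (W : Finset V) (v : V) : ℕ := (W.filter (G.Adj v)).card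

/-- the number of ordered adjacent pairs in `W` -/
noncomputable def pr (G : SimpleGraph V) (W : Finset V) : ℕ := ∑ v ∈ W, nb G W v

lemma HP_complete {G : SimpleGraph V} (W : Finset V) (hW : W.Nonempty)
    (h : ∀ x ∈ W, ∀ y ∈ W, x ≠ y → G.Adj x y) : ∃ p q, HP G W p q := by
  induction hW using Finset.Nonempty.cons_induction with
  | singleton a => exact ⟨a, a, HP.single a⟩
  | cons a s ha hs ih =>
    obtain ⟨p, q, hp⟩ := ih fun x hx y hy => h x (by simp [hx]) y (by simp [hy])
    refine ⟨a, q, (HP.cons a hp ha (h _ (by simp) _ (by simp [hp.left_mem]) ?_)).congr_set (by simp)⟩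
    rintro rfl
    exact ha hp.left_mem

lemma HP.ne {G : SimpleGraph V} {W : Finset V} {p q : V} (h : HP G W p q) (hW : 2 ≤ W.card) : p ≠ q := by
  obtain ⟨m, f, hc, rfl, rfl, hadj, hi, hWW⟩ := h.exists_fun
  intro e
  have := hi 0 (by omega) m le_rfl e
  omega

/-- Pósa's argument. -/
lemma posaSet [Fintype V] (G : SimpleGraph V) (W : Finset V) (h3 : 3 ≤ W.card) (hn : ¬ HC G W) :
    ∃ (d : ℕ) (T : Finset V), T ⊆ W ∧ T.card = d ∧ (∀ v ∈ T, nb G W v ≤ d) ∧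
      (∃ v ∈ W, nb G W v ≤ d) ∧ 2 * d < W.card := by
  obtain ⟨M, hGM, hM⟩ := Set.Finite.exists_le_maximal (s := {G' : SimpleGraph V | ¬ HC G' W})
    (Set.toFinite _) hn
  have hMn : ¬ HC M W := hM.prop
  have hnb : ∀ v, nb G W v ≤ nb M W v := fun v =>
    Finset.card_le_card (Finset.monotone_filter_right _ fun x _ hx => hGM hx)
  -- nonadjacent pairs
  let P : Finset (V × V) := (W ×ˢ W).filter fun x => x.1 ≠ x.2 ∧ ¬ M.Adj x.1 x.2
  have hPne : P.Nonempty := by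
    by_contra hP
    rw [Finset.not_nonempty_iff_eq_empty, Finset.filter_eq_empty_iff] at hP
    have hall : ∀ x ∈ W, ∀ y ∈ W, x ≠ y → M.Adj x y := by
      intro x hx y hy hxy
      by_contra hna
      exact hP (x := (x, y)) (by simp [hx, hy]) ⟨hxy, hna⟩
    obtain ⟨p, q, hp⟩ := HP_complete W (Finset.card_pos.1 (by omega)) hall
    exact hMn ⟨h3, p, q, hp, hall _ hp.right_mem _ hp.left_mem (hp.ne (by omega)).symm⟩
  obtain ⟨⟨u0, w0⟩, hmem0, hmax0⟩ := P.exists_max_image (fun x => nb M W x.1 + nb M W x.2) hPne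
  simp only [P, Finset.mem_filter, Finset.mem_product] at hmem0 hmax0
  obtain ⟨u, w, hu, hw, huw, hna, hmax, hle⟩ : ∃ u w, u ∈ W ∧ w ∈ W ∧ u ≠ w ∧ ¬ M.Adj u w ∧
      (∀ x ∈ W, ∀ y ∈ W, x ≠ y → ¬ M.Adj x y → nb M W x + nb M W y ≤ nb M W u + nb M W w) ∧
      nb M W u ≤ nb M W w := by
    rcases le_total (nb M W u0) (nb M W w0) with h | h
    · exact ⟨u0, w0, hmem0.1.1, hmem0.1.2, hmem0.2.1, hmem0.2.2,
        fun x hx y hy h1 h2 => hmax0 (x, y) ⟨⟨hx, hy⟩, h1, h2⟩, h⟩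
    · refine ⟨w0, u0, hmem0.1.2, hmem0.1.1, hmem0.2.1.symm, fun h => hmem0.2.2 h.symm,
        fun x hx y hy h1 h2 => ?_, h⟩
      have := hmax0 (x, y) ⟨⟨hx, hy⟩, h1, h2⟩
      simp only at this
      omega
  have hHP : HP M W u w := by
    refine HP_of_HC_add (G' := M ⊔ SimpleGraph.edge u w) ?_ ?_ hMn
    · intro x y hxy
      rw [SimpleGraph.sup_adj, SimpleGraph.edge_adj] at hxy
      tauto
    · by_contra hn'
      have := hM.le_of_ge hn' le_sup_left
      exact hna (this (by rw [SimpleGraph.sup_adj, SimpleGraph.edge_adj]; tauto))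
  obtain ⟨m, f, hc, h0, hm, hadj, hi, hW⟩ := hHP.exists_fun
  have hWi : (Finset.Icc 0 m).image f = W := by
    ext x; simp [hW]
  have cross : ∀ i < m, M.Adj u (f (i+1)) → ¬ M.Adj w (f i) := by
    intro i him h1 h2
    refine hMn ⟨h3, f 0, f (i+1), ((HP.seg hi 0 i (by omega) (by omega) fun j _ h => hadj j (by omega)).join
      (HP.seg hi (i+1) m (by omega) (by omega) fun j _ h => hadj j (by omega)).symm ?_ ?_).congr_set ?_, ?_⟩
    · exact HP.seg_disj hi _ _ _ _ (by omega) le_rfl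
    · rw [hm]; exact h2.symm
    · rw [← hWi, ← Finset.image_union]
      congr 1
      ext; simp; omega
    · rw [h0]; exact h1.symm
  let I := (Finset.range m).filter fun i => M.Adj u (f (i+1))
  have hIm : ∀ i ∈ I, i < m ∧ M.Adj u (f (i+1)) := fun i hi => by simpa [I] using hi
  have hT : (I.image f).card = nb M W u := by
    rw [Finset.card_image_of_injOn]
    · unfold nb
      refine Finset.card_bij (fun i _ => f (i+1)) ?_ ?_ ?_
      · intro i h
        have := hIm i h
        simp only [Finset.mem_filter]
        exact ⟨(hW _).2 ⟨i+1, by omega, rfl⟩, this.2⟩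
      · intro i h1 j h2 e
        have := hIm i h1
        have := hIm j h2
        have := hi (i+1) (by omega) (j+1) (by omega) e
        omega
      · intro x hx
        simp only [Finset.mem_filter, hW] at hx
        obtain ⟨⟨j, hj, rfl⟩, hx⟩ := hx
        rcases j with _ | j
        · rw [h0] at hx; exact absurd hx (M.loopless.irrefl u)
        · exact ⟨j, by simp only [I, Finset.mem_filter, Finset.mem_range]; exact ⟨by omega, hx⟩, rfl⟩
    · intro i h1 j h2 e
      have := hIm i h1
      have := hIm j h2
      exact hi i (by omega) j (by omega) e
  have hTW : I.image f ⊆ W := by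
    intro x hx
    obtain ⟨i, h1, rfl⟩ := Finset.mem_image.1 hx
    have := hIm i h1
    exact (hW _).2 ⟨i, by omega, rfl⟩
  have hwT : w ∉ I.image f := by
    intro hx
    obtain ⟨i, h1, e⟩ := Finset.mem_image.1 hx
    have := hIm i h1
    have := hi i (by omega) m le_rfl (e.trans hm.symm)
    omega
  refine ⟨nb M W u, I.image f, hTW, hT, ?_, ⟨u, hu, hnb u⟩, ?_⟩
  · intro v hv
    have hv' := hv
    obtain ⟨i, h1, rfl⟩ := Finset.mem_image.1 hv'
    have h2 := hIm i h1
    have := hmax (f i) (hTW hv) w hw (fun e => hwT (e ▸ hv)) fun h => cross i h2.1 h2.2 h.symm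
    have := hnb (f i)
    omega
  · have hsub : W.filter (M.Adj w) ⊆ W \ insert w (I.image f) := by
      intro x hx
      simp only [Finset.mem_filter] at hx
      simp only [Finset.mem_sdiff, Finset.mem_insert, not_or]
      refine ⟨hx.1, fun e => M.loopless.irrefl w (e ▸ hx.2), fun hx' => ?_⟩
      obtain ⟨i, h1, rfl⟩ := Finset.mem_image.1 hx'
      exact cross i (hIm i h1).1 (hIm i h1).2 hx.2
    have h1 := Finset.card_le_card hsub
    rw [Finset.card_sdiff_of_subset (Finset.insert_subset hw hTW), Finset.card_insert_of_notMem hwT, hT] at h1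
    change nb M W w ≤ _ at h1
    omega

end Posa

section Count
variable {V : Type}

lemma nb_union (G : SimpleGraph V) {A B : Finset V} (h : Disjoint A B) (v : V) :
    nb G (A ∪ B) v = nb G A v + nb G B v := by
  unfold nb
  rw [Finset.filter_union, Finset.card_union_of_disjoint (Finset.disjoint_filter_filter h)]

lemma nb_mono (G : SimpleGraph V) {A B : Finset V} (h : A ⊆ B) (v : V) : nb G A v ≤ nb G B v :=
  Finset.card_le_card (Finset.filter_subset_filter _ h)

lemma nb_le_card (G : SimpleGraph V) (A : Finset V) (v : V) : nb G A v ≤ A.card :=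
  Finset.card_filter_le _ _

lemma nb_add_one_le (G : SimpleGraph V) {A : Finset V} {v : V} (h : v ∈ A) : nb G A v + 1 ≤ A.card := by
  have h1 : A.filter (G.Adj v) ⊆ A.erase v := by
    intro x hx
    rw [Finset.mem_filter] at hx
    exact Finset.mem_erase.2 ⟨fun e => G.loopless.irrefl v (e ▸ hx.2), hx.1⟩
  have h2 := Finset.card_le_card h1
  rw [Finset.card_erase_of_mem h] at h2
  have := Finset.card_pos.2 ⟨v, h⟩
  unfold nb
  omega

lemma sum_nb_comm (G : SimpleGraph V) (A B : Finset V) :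
    ∑ v ∈ A, nb G B v = ∑ v ∈ B, nb G A v := by
  unfold nb
  simp only [Finset.card_filter]
  rw [Finset.sum_comm]
  simp only [G.adj_comm]

lemma pr_union (G : SimpleGraph V) {A B : Finset V} (h : Disjoint A B) :
    pr G (A ∪ B) = pr G A + pr G B + 2 * ∑ v ∈ B, nb G A v := by
  unfold pr
  rw [Finset.sum_union h]
  simp only [nb_union G h, Finset.sum_add_distrib]
  rw [sum_nb_comm G A B]
  omega

lemma pr_insert (G : SimpleGraph V) {A : Finset V} {v : V} (h : v ∉ A) :
    pr G (insert v A) = pr G A + 2 * nb G A v := by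
  have := pr_union G (A := A) (B := {v}) (by simpa using h)
  rw [Finset.insert_eq, Finset.union_comm, this]
  simp [pr, nb]

lemma pr_le (G : SimpleGraph V) (A : Finset V) : pr G A ≤ A.card * (A.card - 1) := by
  unfold pr
  have := Finset.sum_le_card_nsmul A (fun v => nb G A v) (A.card - 1) fun v hv => by
    have := nb_add_one_le G hv
    omega
  simpa using this

lemma nb_insert_self (G : SimpleGraph V) (A : Finset V) (v : V) : nb G (insert v A) v = nb G A v := by
  unfold nb
  rw [Finset.filter_insert, if_neg (G.loopless.irrefl v)]

lemma pr_le_of_low (G : SimpleGraph V) {W T : Finset V} (hT : T ⊆ W) {d : ℕ} (hd : T.card = d)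
    (h : ∀ v ∈ T, nb G W v ≤ d) : pr G W ≤ (W.card - d) * (W.card - d - 1) + 2 * d ^ 2 := by
  have hdis : Disjoint (W \ T) T := Finset.sdiff_disjoint
  have e : (W \ T) ∪ T = W := Finset.sdiff_union_of_subset hT
  have h1 := pr_union G hdis
  rw [e] at h1
  have h2 := pr_le G (W \ T)
  rw [Finset.card_sdiff_of_subset hT, hd] at h2
  have h3 : ∑ v ∈ T, nb G W v = ∑ v ∈ T, nb G (W \ T) v + pr G T := by
    unfold pr
    rw [← Finset.sum_add_distrib]
    refine Finset.sum_congr rfl fun v _ => ?_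
    rw [← nb_union G hdis, e]
  have h4 := Finset.sum_le_card_nsmul T (fun v => nb G W v) d h
  rw [hd, smul_eq_mul] at h4
  nlinarith

lemma numeric {s n d : ℕ} (hs : 1 ≤ s) (h1 : 6 * s + 5 ≤ n) (h2 : (s+2)*(s+3) ≤ 2 * n)
    (hd : s + 1 ≤ d) (hd2 : 2 * d < n) :
    (n - d) * (n - d - 1) + 2 * d ^ 2 + 2 * (s * (n - s - 1)) < n * (n - 1) := by
  have e1 : ((n - d : ℕ) : ℤ) = n - d := by omega
  have e2 : ((n - d - 1 : ℕ) : ℤ) = n - d - 1 := by omega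
  have e3 : ((n - s - 1 : ℕ) : ℤ) = n - s - 1 := by omega
  have e4 : ((n - 1 : ℕ) : ℤ) = n - 1 := by omega
  zify
  rw [e1, e2, e3, e4]
  zify at hs h1 h2 hd hd2
  generalize (n : ℤ) = N at *
  generalize (s : ℤ) = S at *
  generalize (d : ℤ) = D at *
  rcases le_or_gt (N + 1) (6 * D) with h | h
  · have k1 : 0 ≤ (N - 1 - 2 * D) * (6 * D - N - 1) :=
      mul_nonneg (by linarith) (by linarith)
    have k2 : 0 < N ^ 2 - 1 - 8 * S * N + 8 * S ^ 2 + 8 * S := by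
      obtain ⟨r, rfl⟩ : ∃ r, N = 6 * S + 5 + r := ⟨N - (6 * S + 5), by ring⟩
      have hr : 0 ≤ r := by linarith
      have := mul_nonneg (show (0:ℤ) ≤ S by linarith) hr
      nlinarith
    nlinarith
  · have k1 : 0 ≤ (D - (S + 1)) * (2 * N - 3 * S - 4 - 3 * D) :=
      mul_nonneg (by linarith) (by linarith)
    nlinarith

lemma hamMin [Fintype V] (G : SimpleGraph V) (W : Finset V) {s : ℕ} (hs : 1 ≤ s)
    (h1 : 6 * s + 5 ≤ W.card) (h2 : (s+2)*(s+3) ≤ 2 * W.card)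
    (hm : W.card * (W.card - 1) ≤ pr G W + 2 * (s * (W.card - s - 1)))
    (hdeg : ∀ v ∈ W, s + 1 ≤ nb G W v) : HC G W := by
  by_contra hn
  obtain ⟨d, T, hT, hTc, hTd, ⟨v, hv, hvd⟩, hd⟩ := posaSet G W (by omega) hn
  have := numeric hs h1 h2 (hdeg v hv |>.trans hvd) hd
  have := pr_le_of_low G hT hTc hTd
  omega

lemma bondyKey {G : SimpleGraph V} {W : Finset V} {p q : V} (h : HP G W p q) (hpq : G.Adj q p)
    (h3 : 3 ≤ W.card) {l : ℕ} (hl : 3 ≤ l) (hlW : l < W.card) (hn : ∀ D, HC G D → D.card ≠ l) :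
    nb G W p + nb G W q ≤ W.card := by
  obtain ⟨m, f, hc, h0, hm, hadj, hi, hW⟩ := h.exists_fun
  have hWi : (Finset.Icc 0 m).image f = W := by
    ext x; simp [hW]
  subst h0 hm
  set A := (Finset.Icc 1 (m-1)).filter fun i => G.Adj (f 0) (f i) with hA
  set B := (Finset.Icc 1 (m-1)).filter fun i => G.Adj (f m) (f i) with hB
  have hAc : nb G W (f 0) ≤ A.card + 1 := by
    have : W.filter (G.Adj (f 0)) ⊆ insert (f m) (A.image f) := by
      intro x hx
      rw [Finset.mem_filter, hW] at hx
      obtain ⟨⟨i, him, rfl⟩, hx⟩ := hx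
      rcases eq_or_ne i m with rfl | hne
      · simp
      rcases eq_or_ne i 0 with rfl | hne0
      · exact absurd hx (G.loopless.irrefl _)
      exact Finset.mem_insert_of_mem (Finset.mem_image_of_mem _
        (by rw [hA, Finset.mem_filter, Finset.mem_Icc]; exact ⟨by omega, hx⟩))
    exact (Finset.card_le_card this).trans ((Finset.card_insert_le _ _).trans
      (Nat.succ_le_succ Finset.card_image_le))
  have hBc : nb G W (f m) ≤ B.card + 1 := by
    have : W.filter (G.Adj (f m)) ⊆ insert (f 0) (B.image f) := by
      intro x hx
      rw [Finset.mem_filter, hW] at hx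
      obtain ⟨⟨i, him, rfl⟩, hx⟩ := hx
      rcases eq_or_ne i 0 with rfl | hne0
      · simp
      rcases eq_or_ne i m with rfl | hne
      · exact absurd hx (G.loopless.irrefl _)
      exact Finset.mem_insert_of_mem (Finset.mem_image_of_mem _
        (by rw [hB, Finset.mem_filter, Finset.mem_Icc]; exact ⟨by omega, hx⟩))
    exact (Finset.card_le_card this).trans ((Finset.card_insert_le _ _).trans
      (Nat.succ_le_succ Finset.card_image_le))
  let σ : ℕ → ℕ := fun i => if i + l ≤ m + 2 then i + l - 3 else i + l - m - 2
  have hσ : ∀ i ∈ A, σ i ∈ Finset.Icc 1 (m-1) \ B := by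
    intro i hiA
    rw [hA, Finset.mem_filter, Finset.mem_Icc] at hiA
    obtain ⟨hir, hai⟩ := hiA
    rw [Finset.mem_sdiff, hB, Finset.mem_filter, Finset.mem_Icc]
    have hr : 1 ≤ σ i ∧ σ i ≤ m - 1 := by
      simp only [σ]; split_ifs <;> omega
    refine ⟨hr, fun ⟨_, hb⟩ => ?_⟩
    by_cases hcase : i + l ≤ m + 2
    · have hσi : σ i = i + l - 3 := by simp [σ, hcase]
      rw [hσi] at hr hb
      have s1 := HP.seg (G := G) hi i (i+l-3) (by omega) (by omega) fun j _ h => hadj j (by omega)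
      have s0 := HP.seg (G := G) hi 0 0 (by omega) (by omega) fun j _ h => hadj j (by omega)
      have s2 := HP.seg (G := G) hi m m (by omega) (by omega) fun j _ h => hadj j (by omega)
      have d1 := HP.seg_disj hi 0 0 i (i+l-3) (by omega) (by omega)
      have d2 := HP.seg_disj hi i (i+l-3) m m (by omega) (by omega)
      have d3 := HP.seg_disj hi 0 0 m m (by omega) (by omega)
      have hd := Finset.disjoint_union_left.2 ⟨d3, d2⟩
      have hj := (s0.join s1 d1 hai).join s2 hd hb.symm
      have hcard : ((Finset.image f (Finset.Icc 0 0) ∪ Finset.image f (Finset.Icc i (i + l - 3))) ∪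
          Finset.image f (Finset.Icc m m)).card = l := by
        rw [Finset.card_union_of_disjoint hd, Finset.card_union_of_disjoint d1,
          HP.seg_card hi _ _ (by omega), HP.seg_card hi _ _ (by omega), HP.seg_card hi _ _ (by omega)]
        omega
      exact hn _ ⟨by omega, _, _, hj, hpq⟩ hcard
    · have hσi : σ i = i + l - m - 2 := by simp [σ, hcase]
      rw [hσi] at hr hb
      have s1 := HP.seg (G := G) hi 0 (i+l-m-2) (by omega) (by omega) fun j _ h => hadj j (by omega)
      have s2 := HP.seg (G := G) hi i m (by omega) (by omega) fun j _ h => hadj j (by omega)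
      have d1 := HP.seg_disj hi 0 (i+l-m-2) i m (by omega) (by omega)
      have hj := s1.join s2.symm d1 hb.symm
      have hcard : (Finset.image f (Finset.Icc 0 (i+l-m-2)) ∪ Finset.image f (Finset.Icc i m)).card = l := by
        rw [Finset.card_union_of_disjoint d1,
          HP.seg_card hi _ _ (by omega), HP.seg_card hi _ _ (by omega)]
        omega
      exact hn _ ⟨by omega, _, _, hj, hai.symm⟩ hcard
  have hσinj : Set.InjOn σ A := by
    intro i h1 j h2 e
    simp only [hA, Finset.coe_filter, Finset.mem_Icc, Set.mem_ofPred_eq] at h1 h2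
    simp only [σ] at e
    split_ifs at e <;> omega
  have hle := Finset.card_le_card_of_injOn σ hσ hσinj
  have hBs : B ⊆ Finset.Icc 1 (m-1) := Finset.filter_subset _ _
  rw [Finset.card_sdiff_of_subset hBs, Nat.card_Icc] at hle
  have hBle : B.card ≤ m - 1 + 1 - 1 := by
    rw [← Nat.card_Icc]; exact Finset.card_le_card (Finset.filter_subset _ _)
  omega

lemma bondy {G : SimpleGraph V} {W : Finset V} (h : HC G W) {l : ℕ} (hl : 3 ≤ l) (hlW : l ≤ W.card)
    (hn : ∀ D, HC G D → D.card ≠ l) : 2 * pr G W ≤ W.card * W.card := by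
  have hlt : l < W.card := lt_of_le_of_ne hlW (hn W h).symm
  obtain ⟨h3, p, q, h, hpq⟩ := h
  obtain ⟨m, f, hc, h0, hm, hadj, hi, hW⟩ := h.exists_fun
  have hWi : (Finset.Icc 0 m).image f = W := by
    ext x; simp [hW]
  have hlast : nb G W (f 0) + nb G W (f m) ≤ W.card := by
    rw [h0, hm]; exact bondyKey h hpq h3 hl hlt hn
  have hstep : ∀ i ∈ Finset.range m, nb G W (f i) + nb G W (f (i+1)) ≤ W.card := by
    intro i him
    rw [Finset.mem_range] at him
    have s1 := HP.seg (G := G) hi 0 i (by omega) (by omega) fun j _ h => hadj j (by omega)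
    have s2 := HP.seg (G := G) hi (i+1) m (by omega) (by omega) fun j _ h => hadj j (by omega)
    have hj := (s1.symm.join s2.symm (HP.seg_disj hi _ _ _ _ (by omega) le_rfl)
      (by rw [h0, hm]; exact hpq.symm)).congr_set (W' := W) (by
        rw [← hWi, ← Finset.image_union]
        congr 1
        ext; simp; omega)
    exact bondyKey hj (hadj i him).symm h3 hl hlt hn
  have hpr : pr G W = ∑ i ∈ Finset.range (m+1), nb G W (f i) := by
    unfold pr
    conv_lhs => rw [← hWi]
    rw [Finset.sum_image]
    · rw [hWi]
      refine Finset.sum_congr ?_ fun _ _ => rfl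
      ext; simp
    · intro i h1 j h2 e
      simp at h1 h2
      exact hi i h1 j h2 e
  have hs := Finset.sum_le_card_nsmul _ _ _ hstep
  rw [Finset.sum_add_distrib, Finset.card_range, smul_eq_mul] at hs
  have e1 := Finset.sum_range_succ (fun i => nb G W (f i)) m
  have e2 := Finset.sum_range_succ' (fun i => nb G W (f i)) m
  have e3 : W.card * W.card = m * W.card + W.card := by
    conv_lhs => rw [hc]
    rw [hc]; ring
  omega

end Count

section Peel
variable {V : Type}

lemma pr_erase (G : SimpleGraph V) {W : Finset V} {v : V} (h : v ∈ W) :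
    pr G W = pr G (W.erase v) + 2 * nb G W v := by
  conv_lhs => rw [← Finset.insert_erase h]
  rw [pr_insert G (Finset.notMem_erase v W)]
  congr 2
  conv_rhs => rw [← Finset.insert_erase h]
  rw [nb_insert_self]

lemma nb_lower (G : SimpleGraph V) {W : Finset V} {c : ℕ} (hW : W.card * (W.card - 1) ≤ pr G W + 2 * c)
    {v : V} (hv : v ∈ W) : W.card ≤ nb G W v + 1 + c := by
  have h1 := pr_erase G hv
  have h2 := pr_le G (W.erase v)
  rw [Finset.card_erase_of_mem hv] at h2
  have h3 := Finset.card_pos.2 ⟨v, hv⟩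
  generalize W.card = w at *
  rcases w with _ | _ | w
  · omega
  · omega
  · simp only [Nat.add_sub_cancel] at hW h2
    nlinarith

/-- `v` cannot have two non-neighbours if it has few missing edges -/
lemma adj_or_of_nb (G : SimpleGraph V) {W : Finset V} {v a b : V} (hv : v ∈ W) (ha : a ∈ W) (hb : b ∈ W)
    (hva : v ≠ a) (hvb : v ≠ b) (hab : a ≠ b) (h : W.card ≤ nb G W v + 2) :
    G.Adj v a ∨ G.Adj v b := by
  by_contra hcon
  push Not at hcon
  have h1 : W.filter (G.Adj v) ⊆ ((W.erase v).erase a).erase b := by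
    intro y hy
    rw [Finset.mem_filter] at hy
    simp only [Finset.mem_erase]
    refine ⟨?_, ?_, ?_, hy.1⟩
    · rintro rfl; exact hcon.2 hy.2
    · rintro rfl; exact hcon.1 hy.2
    · rintro rfl; exact G.loopless.irrefl _ hy.2
  have h2 := Finset.card_le_card h1
  have hb' : b ∈ (W.erase v).erase a := by simp [hb, hab.symm, hvb.symm]
  have ha' : a ∈ W.erase v := by simp [ha, hva.symm]
  have c1 := Finset.card_erase_add_one hb'
  have c2 := Finset.card_erase_add_one ha'
  have c3 := Finset.card_erase_add_one hv
  unfold nb at h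
  omega

lemma complete_of_pr (G : SimpleGraph V) {W : Finset V} (hW : W.card * (W.card - 1) ≤ pr G W) :
    ∀ x ∈ W, ∀ y ∈ W, x ≠ y → G.Adj x y := by
  intro x hx y hy hxy
  have h := nb_lower G (c := 0) (by simpa using hW) hx
  by_contra hcon
  have h1 : W.filter (G.Adj x) ⊆ (W.erase x).erase y := by
    intro z hz
    rw [Finset.mem_filter] at hz
    simp only [Finset.mem_erase]
    refine ⟨?_, ?_, hz.1⟩
    · rintro rfl; exact hcon hz.2
    · rintro rfl; exact G.loopless.irrefl _ hz.2
  have h2 := Finset.card_le_card h1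
  have c2 := Finset.card_erase_add_one (show y ∈ W.erase x by simp [hy, hxy.symm])
  have c3 := Finset.card_erase_add_one hx
  unfold nb at h
  omega

lemma peel [Fintype V] (G : SimpleGraph V) {n s : ℕ} (hn : s + 2 ≤ n) :
    ∀ r j : ℕ, j + r = s → ∀ W : Finset V, W.card = n - j →
      (n - j) * (n - j - 1) ≤ pr G W + 2 * (r * (n - s - 1)) →
    ∃ j r W, j + r = s ∧ W.card = n - j ∧
      (n - j) * (n - j - 1) ≤ pr G W + 2 * (r * (n - s - 1)) ∧
      (0 < r → ∀ v ∈ W, r + 1 ≤ nb G W v) := by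
  intro r
  induction r with
  | zero =>
    intro j hj W hW h
    exact ⟨j, 0, W, hj, hW, h, fun h => absurd h (by omega)⟩
  | succ r ih =>
    intro j hj W hW h
    by_cases hd : ∀ v ∈ W, r + 1 + 1 ≤ nb G W v
    · exact ⟨j, r+1, W, hj, hW, h, fun _ => hd⟩
    · push Not at hd
      obtain ⟨v, hv, hvn⟩ := hd
      refine ih (j+1) (by omega) (W.erase v) (by rw [Finset.card_erase_of_mem hv]; omega) ?_
      have h1 := pr_erase G hv
      rw [h1] at h
      obtain ⟨e, he⟩ : ∃ e, n = s + 2 + e := ⟨n - s - 2, by omega⟩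
      subst he
      subst hj
      have a1 : j + (r + 1) + 2 + e - j = r + e + 3 := by omega
      have a2 : j + (r + 1) + 2 + e - (j + (r + 1)) - 1 = e + 1 := by omega
      have a3 : j + (r + 1) + 2 + e - (j + 1) = r + e + 2 := by omega
      rw [a1, a2] at h
      rw [a2, a3]
      simp only [show r + e + 3 - 1 = r + e + 2 by omega, show r + e + 2 - 1 = r + e + 1 by omega] at *
      nlinarith

lemma HC_of_complete {G : SimpleGraph V} {W : Finset V} (h3 : 3 ≤ W.card)
    (h : ∀ x ∈ W, ∀ y ∈ W, x ≠ y → G.Adj x y) : HC G W := by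
  obtain ⟨p, q, hp⟩ := HP_complete W (Finset.card_pos.1 (by omega)) h
  exact ⟨h3, p, q, hp, h _ hp.right_mem _ hp.left_mem (hp.ne (by omega)).symm⟩

/-- Outcome of the peeling process. -/
lemma peel_main [Fintype V] (G : SimpleGraph V) {n s : ℕ} (hn : Fintype.card V = n)
    (h1 : 6 * s + 5 ≤ n) (h2 : (s + 2) * (s + 3) ≤ 2 * n)
    (hm : n * (n - 1) ≤ pr G Finset.univ + 2 * (s * (n - s - 1))) :
    ∃ j r W, j + r = s ∧ W.card = n - j ∧
      (n - j) * (n - j - 1) ≤ pr G W + 2 * (r * (n - s - 1)) ∧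
      (0 < r → ∀ v ∈ W, r + 1 ≤ nb G W v) ∧ HC G W := by
  obtain ⟨j, r, W, hjr, hW, hp, hd⟩ := peel G (n := n) (s := s) (by omega) s 0 (by omega) Finset.univ
    (by simp [hn]) (by simpa using hm)
  refine ⟨j, r, W, hjr, hW, hp, hd, ?_⟩
  rcases Nat.eq_zero_or_pos r with rfl | hr
  · refine HC_of_complete (by omega) (complete_of_pr G ?_)
    rw [hW]; simpa using hp
  · refine hamMin G W (s := r) hr (by omega) ?_ ?_ (hd hr)
    · rw [hW]
      subst hjr
      obtain ⟨e, he⟩ : ∃ e, n = j + e := ⟨n - j, by omega⟩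
      subst he
      simp only [Nat.add_sub_cancel_left]
      nlinarith
    · rw [hW, show n - j - r - 1 = n - s - 1 by omega]
      exact hp

/-- all shorter cycle lengths -/
lemma weakly [Fintype V] (G : SimpleGraph V) {n s : ℕ} (hn : Fintype.card V = n)
    (h1 : 6 * s + 5 ≤ n)
    (hm : n * (n - 1) ≤ pr G Finset.univ + 2 * (s * (n - s - 1))) {W : Finset V} (hW : HC G W)
    (hc : n - s ≤ W.card) {l : ℕ} (hl : 3 ≤ l) (hlW : l ≤ W.card) : ∃ D, HC G D ∧ D.card = l := by
  by_contra hcon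
  push Not at hcon
  have hb := bondy hW hl hlW hcon
  have hWn : W.card ≤ n := hn ▸ Finset.card_le_univ W
  -- missing edges inside W
  have hmiss : W.card * (W.card - 1) ≤ pr G W + 2 * (s * (n - s - 1)) := by
    have hdis : Disjoint W (Finset.univ \ W) := Finset.disjoint_sdiff
    have e1 := pr_union G hdis
    rw [Finset.union_sdiff_of_subset (Finset.subset_univ W)] at e1
    have e2 := pr_le G (Finset.univ \ W)
    have hcd : (Finset.univ \ W).card = n - W.card := by
      rw [Finset.card_sdiff_of_subset (Finset.subset_univ W), Finset.card_univ, hn]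
    have e3 := Finset.sum_le_card_nsmul (Finset.univ \ W) (fun v => nb G W v) W.card
      fun v _ => nb_le_card G W v
    rw [hcd] at e2 e3
    rw [smul_eq_mul] at e3
    obtain ⟨e, he⟩ : ∃ e, n = W.card + e := ⟨n - W.card, by omega⟩
    have a1 : n - W.card = e := by omega
    rw [a1] at e2 e3
    generalize W.card = w at *
    have : n * (n - 1) = w * (w - 1) + e * (e - 1) + 2 * (e * w) := by
      subst he
      rcases w with _ | w
      · simp
      · rcases e with _ | e
        · simp
        · simp only [Nat.add_sub_cancel, show w + 1 + (e + 1) - 1 = w + e + 1 by omega]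
          ring
    omega
  obtain ⟨c, hcc⟩ : ∃ c, W.card = n - s + c := ⟨W.card - (n - s), by omega⟩
  obtain ⟨m, hmm⟩ : ∃ m, n = 6 * s + 5 + m := ⟨n - (6 * s + 5), by omega⟩
  have a2 : W.card = 5 * s + 5 + m + c := by omega
  have a3 : W.card - 1 = 5 * s + 4 + m + c := by omega
  have a4 : n - s - 1 = 5 * s + 4 + m := by omega
  rw [a3, a4, a2] at hmiss
  rw [a2] at hb
  nlinarith

end Peel

section Paths
variable {V : Type}

lemma HC_rot {G : SimpleGraph V} {W : Finset V} (h : HC G W) {u : V} (hu : u ∈ W) :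
    ∃ q, HP G W u q ∧ G.Adj q u := by
  obtain ⟨h3, p, q, h, hpq⟩ := h
  obtain ⟨m, f, hc, h0, hm, hadj, hi, hW⟩ := h.exists_fun
  have hWi : (Finset.Icc 0 m).image f = W := by
    ext x; simp [hW]
  obtain ⟨i, him, rfl⟩ := (hW u).1 hu
  rcases i with _ | i
  · exact ⟨q, h0 ▸ h, h0 ▸ hpq⟩
  · have s1 := HP.seg (G := G) hi 0 i (by omega) (by omega) fun j _ h => hadj j (by omega)
    have s2 := HP.seg (G := G) hi (i+1) m (by omega) (by omega) fun j _ h => hadj j (by omega)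
    refine ⟨f i, (s2.join s1 (HP.seg_disj hi _ _ _ _ (by omega) le_rfl).symm
      (by rw [h0, hm]; exact hpq)).congr_set ?_, hadj i (by omega)⟩
    rw [← hWi, ← Finset.image_union]
    congr 1
    ext; simp; omega

lemma HP.uncons {G : SimpleGraph V} {W : Finset V} {p q : V} (h : HP G W p q) (h2 : 2 ≤ W.card) :
    ∃ p', HP G (W.erase p) p' q ∧ G.Adj p p' := by
  cases h with
  | single => simp at h2
  | cons u h hu ha => exact ⟨_, by rwa [Finset.erase_insert hu], ha⟩

lemma posaPath [Fintype V] (G : SimpleGraph V) {H : Finset V} {u p q : V} (hu : u ∉ H) (hp : p ∈ H)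
    (hq : q ∈ H) (hpq : p ≠ q) (hn : ¬ HP G H p q) :
    ∃ (d : ℕ) (T : Finset V), T ⊆ H ∧ d ≤ T.card + 1 ∧ (∀ v ∈ T, nb G H v ≤ d) ∧
      (∀ v ∈ T, v = p ∨ v = q → nb G H v + 1 ≤ d) ∧
      (2 ≤ d ∨ ∃ v ∈ H, nb G H v ≤ d) ∧ 2 * d ≤ H.card := by
  have hup : u ≠ p := fun e => hu (e ▸ hp)
  have huq : u ≠ q := fun e => hu (e ▸ hq)
  have hH2 : 2 ≤ H.card := by
    have := Finset.card_le_card (show ({p, q} : Finset V) ⊆ H by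
      intro x hx; simp at hx; rcases hx with rfl | rfl <;> assumption)
    rwa [Finset.card_pair hpq] at this
  obtain ⟨G', hG'⟩ : ∃ G' : SimpleGraph V, ∀ x y, G'.Adj x y ↔ ((x ∈ H ∧ y ∈ H ∧ G.Adj x y) ∨
      (x = u ∧ (y = p ∨ y = q)) ∨ (y = u ∧ (x = p ∨ x = q))) := ⟨
    { Adj := fun x y => (x ∈ H ∧ y ∈ H ∧ G.Adj x y) ∨ (x = u ∧ (y = p ∨ y = q)) ∨
        (y = u ∧ (x = p ∨ x = q))
      symm := ⟨by
        rintro x y (⟨h1, h2, h3⟩ | h | h)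
        · exact Or.inl ⟨h2, h1, h3.symm⟩
        · exact Or.inr (Or.inr h)
        · exact Or.inr (Or.inl h)⟩
      loopless := ⟨by
        rintro x (⟨h1, h2, h3⟩ | ⟨rfl, h | h⟩ | ⟨rfl, h | h⟩)
        · exact G.loopless.irrefl x h3
        · exact hup h
        · exact huq h
        · exact hup h
        · exact huq h⟩ }, fun _ _ => Iff.rfl⟩
  have hcard : (insert u H).card = H.card + 1 := Finset.card_insert_of_notMem hu
  have hno : ¬ HC G' (insert u H) := by
    intro hc
    obtain ⟨q', h1, h2⟩ := HC_rot hc (Finset.mem_insert_self u H)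
    obtain ⟨p', h3, h4⟩ := h1.uncons (by omega)
    rw [Finset.erase_insert hu] at h3
    have hne := h3.ne hH2
    have h5 := h3.left_mem
    have h6 := h3.right_mem
    have hp' : p' = p ∨ p' = q := by
      rcases (hG' _ _).1 h4 with h | h | h
      · exact absurd h.1 hu
      · exact h.2
      · exact absurd (h.1 ▸ h5) hu
    have hq' : q' = p ∨ q' = q := by
      rcases (hG' _ _).1 h2 with h | h | h
      · exact absurd h.2.1 hu
      · exact absurd (h.1 ▸ h6) hu
      · exact h.2
    have h7 : HP G H p' q' := h3.mono fun x hx y hy hxy => by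
      rcases (hG' _ _).1 hxy with h | h | h
      · exact h.2.2
      · exact absurd (h.1 ▸ hx) hu
      · exact absurd (h.1 ▸ hy) hu
    rcases hp' with rfl | rfl <;> rcases hq' with rfl | rfl
    · exact hne rfl
    · exact hn h7
    · exact hn h7.symm
    · exact hne rfl
  obtain ⟨d, T, hT, hTc, hTd, hv, hd⟩ := posaSet G' (insert u H) (by omega) hno
  have hnbH : ∀ v ∈ H, nb G H v = nb G' H v := by
    intro v hv
    unfold nb
    congr 1
    refine Finset.filter_congr fun y hy => ?_
    rw [hG']
    constructor
    · intro h; exact Or.inl ⟨hv, hy, h⟩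
    · rintro (h | h | h)
      · exact h.2.2
      · exact absurd (h.1 ▸ hv) hu
      · exact absurd (h.1 ▸ hy) hu
  have hle : ∀ v ∈ H, nb G H v ≤ nb G' (insert u H) v := fun v hv =>
    (hnbH v hv) ▸ nb_mono G' (Finset.subset_insert u H) v
  refine ⟨d, T.erase u, ?_, ?_, ?_, ?_, ?_, by omega⟩
  · intro x hx
    rw [Finset.mem_erase] at hx
    exact (Finset.mem_insert.1 (hT hx.2)).resolve_left hx.1
  · have := Finset.pred_card_le_card_erase (s := T) (a := u)
    omega
  · intro v hv
    rw [Finset.mem_erase] at hv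
    exact (hle v ((Finset.mem_insert.1 (hT hv.2)).resolve_left hv.1)).trans (hTd v hv.2)
  · intro v hv hvpq
    rw [Finset.mem_erase] at hv
    have hvH := (Finset.mem_insert.1 (hT hv.2)).resolve_left hv.1
    refine le_trans ?_ (hTd v hv.2)
    rw [hnbH v hvH, Finset.insert_eq, nb_union G' (by simpa using hu), add_comm]
    refine Nat.add_le_add_right ?_ _
    unfold nb
    rw [Finset.one_le_card]
    exact ⟨u, by rw [Finset.mem_filter]; exact ⟨by simp, (hG' _ _).2 (Or.inr (Or.inr ⟨rfl, hvpq⟩))⟩⟩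
  · obtain ⟨v, hv, hvd⟩ := hv
    rcases Finset.mem_insert.1 hv with rfl | hv
    · left
      refine le_trans ?_ hvd
      rw [← Finset.card_pair hpq]
      refine Finset.card_le_card fun x hx => ?_
      rw [Finset.mem_insert, Finset.mem_singleton] at hx
      rw [Finset.mem_filter]
      exact ⟨Finset.mem_insert_of_mem (by rcases hx with rfl | rfl <;> assumption), (hG' _ _).2 (Or.inr (Or.inl ⟨rfl, hx⟩))⟩
    · right
      exact ⟨v, hv, (hle v hv).trans hvd⟩

/-- sets missing at most one edge are Hamilton-connected -/
lemma HP_almost [Fintype V] (G : SimpleGraph V) {B : Finset V} {u p q : V} (hB : 6 ≤ B.card)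
    (hm : B.card * (B.card - 1) ≤ pr G B + 2) (hu : u ∉ B) (hp : p ∈ B) (hq : q ∈ B) (hpq : p ≠ q) :
    HP G B p q := by
  by_contra hn
  obtain ⟨d, T, hT, hTc, hTd, -, h2, hd⟩ := posaPath G hu hp hq hpq hn
  have hlow : ∀ v ∈ B, B.card ≤ nb G B v + 1 + 1 := fun v hv => nb_lower G (c := 1) (by simpa using hm) hv
  have hd2 : 2 ≤ d := by
    rcases h2 with h | ⟨v, hv, h⟩
    · exact h
    · have := hlow v hv
      omega
  obtain ⟨v, hv⟩ := Finset.card_pos.1 (show 0 < T.card by omega)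
  have := hlow v (hT hv)
  have := hTd v hv
  omega

lemma almost_erase (G : SimpleGraph V) {B : Finset V} {v : V} (hv : v ∈ B)
    (hm : B.card * (B.card - 1) ≤ pr G B + 2) :
    (B.erase v).card * ((B.erase v).card - 1) ≤ pr G (B.erase v) + 2 := by
  have h1 := pr_erase G hv
  have h2 := nb_add_one_le G hv
  have h3 := Finset.card_erase_add_one hv
  generalize (B.erase v).card = e at *
  rw [← h3] at hm h2
  rcases e with _ | e
  · simp
  · simp only [Nat.add_sub_cancel] at *
    nlinarith

/-- Hamiltonian paths through a degree-two vertex `x` -/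
lemma HP_x [Fintype V] (G : SimpleGraph V) {B : Finset V} {x a b : V} (hB : 8 ≤ B.card)
    (hm : B.card * (B.card - 1) ≤ pr G B + 2) (hx : x ∉ B) (ha : a ∈ B) (hb : b ∈ B) (hab : a ≠ b)
    (hxa : G.Adj x a) (hxb : G.Adj x b) {p q : V} (hp : p ∈ insert x B) (hq : q ∈ insert x B)
    (hpq : p ≠ q) (h1 : ¬ (p = a ∧ q = b)) (h2 : ¬ (p = b ∧ q = a)) : HP G (insert x B) p q := by
  -- starting at x
  have start : ∀ q ∈ B, HP G (insert x B) x q := by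
    intro q hq
    rcases eq_or_ne a q with rfl | h
    · exact HP.cons x (HP_almost G (by omega) hm hx hb hq hab.symm) hx hxb
    · exact HP.cons x (HP_almost G (by omega) hm hx ha hq h) hx hxa
  -- starting at a
  have starta : ∀ a ∈ B, ∀ b ∈ B, ∀ q ∈ B, G.Adj x a → G.Adj x b → a ≠ b → q ≠ a → q ≠ b →
      HP G (insert x B) a q := by
    intro a ha b hb q hq hxa hxb hab hqa hqb
    have hp := HP_almost G (B := B.erase a) (by have := Finset.card_erase_add_one ha; omega)
      (almost_erase G ha hm) (u := x) (by simp [hx]) (p := b) (q := q) (by simp [hb, hab.symm]) (by simp [hq, hqa]) hqb.symm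
    have hp2 := HP.cons x hp (by simp [hx]) hxb
    have hp3 := HP.cons a hp2 (by simp; rintro rfl; exact hx ha) hxa.symm
    exact hp3.congr_set (by rw [Finset.insert_comm, Finset.insert_erase ha])
  have mid : ∀ a ∈ B, ∀ b ∈ B, ∀ p ∈ B, ∀ q ∈ B, G.Adj x a → G.Adj x b → a ≠ b → p ≠ a → p ≠ b →
      q ≠ a → q ≠ b → p ≠ q → G.Adj p a → HP G (insert x B) p q := by
    intro a ha b hb p hp q hq hxa hxb hab hpa hpb hqa hqb hpq hadj
    have ha' : a ∈ B.erase p := by simp [ha, hpa.symm]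
    have c1 := Finset.card_erase_add_one hp
    have c2 := Finset.card_erase_add_one ha'
    have hP := HP_almost G (B := (B.erase p).erase a) (by omega)
      (almost_erase G ha' (almost_erase G hp hm)) (u := x) (by simp [hx]) (p := b) (q := q)
      (by simp [hb, hab.symm, hpb.symm]) (by simp [hq, hqa, hpq.symm]) hqb.symm
    have hp2 := HP.cons x hP (by simp [hx]) hxb
    have hp3 := HP.cons a hp2 (by simp; rintro rfl; exact hx ha) hxa.symm
    have hp4 := HP.cons p hp3 (by simp [hpa]; intro e; exact hx (e ▸ hp)) hadj
    exact hp4.congr_set (by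
      rw [Finset.insert_comm a x, Finset.insert_erase ha', Finset.insert_comm, Finset.insert_erase hp])
  rcases Finset.mem_insert.1 hp with rfl | hp'
  · exact start q ((Finset.mem_insert.1 hq).resolve_left hpq.symm)
  rcases Finset.mem_insert.1 hq with rfl | hq'
  · exact (start p hp').symm
  by_cases e1 : p = a
  · subst e1
    exact starta p ha b hb q hq' hxa hxb hab hpq.symm (by tauto)
  by_cases e2 : p = b
  · subst e2
    exact starta p hb a ha q hq' hxb hxa hab.symm hpq.symm (by tauto)
  by_cases e3 : q = a
  · subst e3
    exact (starta q ha b hb p hp' hxa hxb hab hpq e2).symm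
  by_cases e4 : q = b
  · subst e4
    exact (starta q hb a ha p hp' hxb hxa hab.symm hpq e1).symm
  have hl := nb_lower G (c := 1) (by simpa using hm) hp'
  rcases adj_or_of_nb G hp' ha hb e1 e2 hab (by omega) with h | h
  · exact mid a ha b hb p hp' q hq' hxa hxb hab e1 e2 e3 e4 hpq h
  · exact mid b hb a ha p hp' q hq' hxb hxa hab.symm e2 e1 e4 e3 hpq h

end Paths

section CaseOne
variable {V : Type}

lemma HC_join {G : SimpleGraph V} {W D : Finset V} {p q u v : V} (h : HP G W p q) (h' : HP G D u v)
    (hd : Disjoint W D) (hqu : G.Adj q u) (hvp : G.Adj v p) (h3 : 3 ≤ W.card) :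
    HC G (W ∪ D) ∧ (W ∪ D).card = W.card + D.card := by
  have hc := Finset.card_union_of_disjoint hd
  exact ⟨⟨by omega, p, v, h.join h' hd hqu, hvp⟩, hc⟩

lemma pr_le_of_low' (G : SimpleGraph V) {W T : Finset V} (hT : T ⊆ W) {t d : ℕ} (ht : T.card = t)
    (h : ∀ v ∈ T, nb G W v ≤ d) : pr G W ≤ (W.card - t) * (W.card - t - 1) + 2 * (t * d) := by
  have hdis : Disjoint (W \ T) T := Finset.sdiff_disjoint
  have e : (W \ T) ∪ T = W := Finset.sdiff_union_of_subset hT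
  have h1 := pr_union G hdis
  rw [e] at h1
  have h2 := pr_le G (W \ T)
  rw [Finset.card_sdiff_of_subset hT, ht] at h2
  have h3 : ∑ v ∈ T, nb G W v = ∑ v ∈ T, nb G (W \ T) v + pr G T := by
    unfold pr
    rw [← Finset.sum_add_distrib]
    refine Finset.sum_congr rfl fun v _ => ?_
    rw [← nb_union G hdis, e]
  have h4 := Finset.sum_le_card_nsmul T (fun v => nb G W v) d h
  rw [ht, smul_eq_mul] at h4
  omega

lemma find_x [Fintype V] (G : SimpleGraph V) {H : Finset V} {u p q : V} (hH : 15 ≤ H.card)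
    (hm : H.card * (H.card - 1) ≤ pr G H + 2 * (H.card - 2)) (hdeg : ∀ v ∈ H, 2 ≤ nb G H v)
    (hu : u ∉ H) (hp : p ∈ H) (hq : q ∈ H) (hpq : p ≠ q) (hn : ¬ HP G H p q) :
    ∃ x ∈ H, nb G H x = 2 ∧ (H.erase x).card * ((H.erase x).card - 1) ≤ pr G (H.erase x) + 2 := by
  obtain ⟨d, T, hT, hTc, hTd, hTpq, h2, hd⟩ := posaPath G hu hp hq hpq hn
  have hd2 : 2 ≤ d := by
    rcases h2 with h | ⟨v, hv, h⟩
    · exact h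
    · exact (hdeg v hv).trans h
  have hd3 : d = 2 := by
    by_contra hne
    obtain ⟨T', hT', hc'⟩ := Finset.exists_subset_card_eq (s := T) (n := d - 1) (by omega)
    have := pr_le_of_low' G (hT'.trans hT) hc' (d := d) fun v hv => hTd v (hT' hv)
    generalize H.card = h at *
    generalize pr G H = P at *
    obtain ⟨c, rfl⟩ : ∃ c, d = c + 3 := ⟨d - 3, by omega⟩
    obtain ⟨e, rfl⟩ : ∃ e, h = 2 * (c + 3) + e := ⟨h - 2 * (c+3), by omega⟩
    have a1 : 2 * (c + 3) + e - (c + 3 - 1) = c + 4 + e := by omega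
    have a2 : c + 4 + e - 1 = c + 3 + e := by omega
    have a3 : 2 * (c + 3) + e - 1 = 2 * c + 5 + e := by omega
    have a4 : 2 * (c + 3) + e - 2 = 2 * c + 4 + e := by omega
    have a5 : c + 3 - 1 = c + 2 := by omega
    rw [a1, a2, a5] at this
    rw [a3, a4] at hm
    have := Nat.zero_le (c * e)
    nlinarith
  subst hd3
  obtain ⟨x, hx⟩ := Finset.card_pos.1 (show 0 < T.card by omega)
  have hx2 : nb G H x = 2 := le_antisymm (hTd x hx) (hdeg x (hT hx))
  refine ⟨x, hT hx, hx2, ?_⟩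
  have h1 := pr_erase G (hT hx)
  have c1 := Finset.card_erase_add_one (hT hx)
  rw [hx2] at h1
  rw [h1, ← c1] at hm
  generalize (H.erase x).card = e at *
  obtain ⟨f, rfl⟩ : ∃ f, e = f + 2 := ⟨e - 2, by omega⟩
  have a1 : f + 2 + 1 - 1 = f + 2 := by omega
  have a2 : f + 2 + 1 - 2 = f + 1 := by omega
  have a3 : f + 2 - 1 = f + 1 := by omega
  rw [a1, a2] at hm
  rw [a3]
  nlinarith

structure CaseOne [Fintype V] (G : SimpleGraph V) (B : Finset V) (x a b : V) : Prop where
  hB : 8 ≤ B.card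
  hm : B.card * (B.card - 1) ≤ pr G B + 2
  hx : x ∉ B
  ha : a ∈ B
  hb : b ∈ B
  hab : a ≠ b
  hxa : G.Adj x a
  hxb : G.Adj x b
  hx2 : nb G B x = 2
  hno : ∀ D, HC G D → D.card ≤ B.card + 1

namespace CaseOne
variable [Fintype V] {G : SimpleGraph V} {B : Finset V} {x a b : V}

lemma cardH (h : CaseOne G B x a b) : (insert x B).card = B.card + 1 :=
  Finset.card_insert_of_notMem h.hx

lemma swap (h : CaseOne G B x a b) : CaseOne G B x b a :=
  ⟨h.hB, h.hm, h.hx, h.hb, h.ha, h.hab.symm, h.hxb, h.hxa, h.hx2, h.hno⟩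

/-- no outside path between `p` and `q` unless `{p,q} = {a,b}` -/
lemma R1 (h : CaseOne G B x a b) {D : Finset V} {u v p q : V} (hD : HP G D u v)
    (hdis : Disjoint (insert x B) D) (hp : p ∈ insert x B) (hq : q ∈ insert x B) (hpq : p ≠ q)
    (hup : G.Adj u p) (hvq : G.Adj v q) : (p = a ∧ q = b) ∨ (p = b ∧ q = a) := by
  by_contra hcon
  push Not at hcon
  have hP := HP_x G h.hB h.hm h.hx h.ha h.hb h.hab h.hxa h.hxb hp hq hpq
    (fun hh => hcon.1 hh.1 hh.2) (fun hh => hcon.2 hh.1 hh.2)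
  have := h.hB
  have hc := h.cardH
  obtain ⟨h1, h2⟩ := HC_join hP.symm hD hdis hup.symm hvq (by omega)
  have := h.hno _ h1
  have := Finset.card_pos.2 ⟨_, hD.left_mem⟩
  omega

/-- a path on at least two outside vertices has only one attachment -/
lemma R2 (h : CaseOne G B x a b) {D : Finset V} {u v p q : V} (hD : HP G D u v)
    (hdis : Disjoint (insert x B) D) (hp : p ∈ insert x B) (hq : q ∈ insert x B) (hpq : p ≠ q)
    (hup : G.Adj u p) (hvq : G.Adj v q) (h2 : 2 ≤ D.card) : False := by
  have := h.hB
  have hdB : Disjoint B D := Finset.disjoint_of_subset_left (Finset.subset_insert x B) hdis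
  have key : p ∈ B ∧ q ∈ B := by
    rcases h.R1 hD hdis hp hq hpq hup hvq with ⟨rfl, rfl⟩ | ⟨rfl, rfl⟩
    · exact ⟨h.ha, h.hb⟩
    · exact ⟨h.hb, h.ha⟩
  have hP := HP_almost G (by omega) h.hm h.hx key.1 key.2 hpq
  obtain ⟨h1, h2⟩ := HC_join hP.symm hD hdB hup.symm hvq (by omega)
  have := h.hno _ h1
  omega

lemma out_single (u : V) (hu : u ∉ insert x B) : Disjoint (insert x B) {u} := by
  simpa using hu

/-- two neighbours in `H` means exactly `a`, `b` -/
lemma att (h : CaseOne G B x a b) {u : V} (hu : u ∉ insert x B) (h2 : 2 ≤ nb G (insert x B) u) :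
    G.Adj u a ∧ G.Adj u b ∧ (∀ y ∈ insert x B, G.Adj u y → y = a ∨ y = b) ∧
      nb G (insert x B) u = 2 := by
  obtain ⟨p, hp, q, hq, hpq⟩ := Finset.one_lt_card.1 (show 1 < ((insert x B).filter (G.Adj u)).card from h2)
  rw [Finset.mem_filter] at hp hq
  have hab : G.Adj u a ∧ G.Adj u b := by
    rcases h.R1 (HP.single u) (out_single u hu) hp.1 hq.1 hpq hp.2 hq.2 with ⟨rfl, rfl⟩ | ⟨rfl, rfl⟩
    · exact ⟨hp.2, hq.2⟩
    · exact ⟨hq.2, hp.2⟩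
  have hall : ∀ y ∈ insert x B, G.Adj u y → y = a ∨ y = b := by
    intro y hy huy
    rcases eq_or_ne y a with e | e
    · exact Or.inl e
    · rcases h.R1 (HP.single u) (out_single u hu) hy (Finset.mem_insert_of_mem h.ha) e huy hab.1 with h | h
      · exact Or.inl h.1
      · exact Or.inr h.1
  refine ⟨hab.1, hab.2, hall, le_antisymm ?_ h2⟩
  rw [← Finset.card_pair h.hab]
  refine Finset.card_le_card fun y hy => ?_
  rw [Finset.mem_filter] at hy
  simpa using hall y hy.1 hy.2

lemma HP_pair {G : SimpleGraph V} {u v : V} (h : G.Adj u v) : HP G {u, v} u v :=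
  HP.cons u (HP.single v) (by simpa using h.ne) h

lemma count (h : CaseOne G B x a b) {t : ℕ} (ht : (Finset.univ \ insert x B).card = t)
    (he : B.card * (B.card - 1) + (t + 1) * (t + 2) ≤ pr G Finset.univ) :
    t ≤ 1 ∨ (t = 2 ∧ (∀ u ∉ insert x B, 2 ≤ nb G (insert x B) u) ∧
      (∀ u ∉ insert x B, ∀ v ∉ insert x B, ¬ G.Adj u v) ∧ B.card * (B.card - 1) ≤ pr G B) := by
  set H := insert x B with hH
  set S := Finset.univ \ H with hS
  have memS : ∀ u, u ∈ S ↔ u ∉ H := by simp [hS]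
  set A := S.filter fun u => 2 ≤ nb G H u with hA
  set R := S.filter fun u => ¬ 2 ≤ nb G H u with hR
  have memA : ∀ u, u ∈ A ↔ u ∉ H ∧ 2 ≤ nb G H u := by simp [hA, memS]
  have memR : ∀ u, u ∈ R ↔ u ∉ H ∧ ¬ 2 ≤ nb G H u := by simp [hR, memS]
  have hAR : Disjoint A R := Finset.disjoint_filter_filter_not S S _
  have hARS : A ∪ R = S := Finset.filter_union_filter_not_eq _ S
  have hcard : A.card + R.card = t := by
    rw [← Finset.card_union_of_disjoint hAR, hARS, ht]
  have hdisj : ∀ D : Finset V, (∀ u ∈ D, u ∉ H) → Disjoint H D := fun D hD =>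
    Finset.disjoint_right.2 hD
  have haH : a ∈ H := Finset.mem_insert_of_mem h.ha
  have hbH : b ∈ H := Finset.mem_insert_of_mem h.hb
  -- adjacency of a member of A and a vertex with an attachment is impossible
  have noadj : ∀ u ∈ A, ∀ v, v ∉ H → 1 ≤ nb G H v → ¬ G.Adj u v := by
    intro u hu v hv hv1 huv
    rw [memA] at hu
    have hatt := h.att hu.1 hu.2
    obtain ⟨p, hp⟩ := Finset.card_pos.1 (show 0 < (H.filter (G.Adj v)).card from hv1)
    rw [Finset.mem_filter] at hp
    have hd : Disjoint H {u, v} := hdisj _ (by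
      intro y hy; simp at hy; rcases hy with rfl | rfl; exacts [hu.1, hv])
    have hc : ({u, v} : Finset V).card = 2 := Finset.card_pair huv.ne
    rcases eq_or_ne p a with rfl | hpa
    · exact h.R2 (HP_pair huv) hd hbH hp.1 h.hab.symm hatt.2.1 hp.2 (by omega)
    · exact h.R2 (HP_pair huv) hd haH hp.1 hpa.symm hatt.1 hp.2 (by omega)
  have nbA : ∀ z, z ∉ H → nb G A z ≤ 1 := by
    intro z hz
    by_contra hcon
    obtain ⟨u, hu, v, hv, huv⟩ := Finset.one_lt_card.1
      (show 1 < (A.filter (G.Adj z)).card from not_le.1 hcon)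
    rw [Finset.mem_filter, memA] at hu hv
    have h1 := h.att hu.1.1 hu.1.2
    have h2 := h.att hv.1.1 hv.1.2
    have hp : HP G (insert u {z, v}) u v := HP.cons u (HP_pair hv.2)
      (by simp [huv, hu.2.ne.symm]) hu.2.symm
    refine h.R2 hp (hdisj _ ?_) haH hbH h.hab h1.1 h2.2.1 ?_
    · intro y hy; simp at hy; rcases hy with rfl | rfl | rfl; exacts [hu.1.1, hz, hv.1.1]
    · rw [Finset.card_insert_of_notMem (by simp [huv, hu.2.ne.symm]), Finset.card_pair hv.2.ne]
      omega
  have prA : pr G A = 0 := by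
    unfold pr
    refine Finset.sum_eq_zero fun u hu => ?_
    unfold nb
    rw [Finset.card_eq_zero, Finset.filter_eq_empty_iff]
    intro v hv
    have hv' := (memA v).1 hv
    exact noadj u hu v hv'.1 (by omega)
  have hRsum : ∑ z ∈ R, (nb G H z + nb G A z) ≤ R.card := by
    have := Finset.sum_le_card_nsmul R (fun z => nb G H z + nb G A z) 1 ?_
    · simpa using this
    intro z hz
    rw [memR] at hz
    rcases Nat.eq_zero_or_pos (nb G H z) with h0 | h0
    · have := nbA z hz.1; omega
    · have : nb G A z = 0 := by
        unfold nb
        rw [Finset.card_eq_zero, Finset.filter_eq_empty_iff]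
        intro v hv hzv
        exact noadj v hv z hz.1 h0 hzv.symm
      omega
  have hAsum : ∑ u ∈ A, nb G H u ≤ A.card * 2 := by
    have := Finset.sum_le_card_nsmul A (fun z => nb G H z) 2 fun u hu => by
      rw [memA] at hu
      exact (h.att hu.1 hu.2).2.2.2.le
    simpa using this
  have e1 := pr_union G (A := H) (B := S) Finset.disjoint_sdiff
  rw [Finset.union_sdiff_of_subset (Finset.subset_univ H)] at e1
  have e2 : pr G H = pr G B + 4 := by rw [hH, pr_insert G h.hx, h.hx2]
  have e3 := pr_union G hAR
  rw [hARS, prA] at e3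
  have e4 : ∑ u ∈ S, nb G H u = ∑ u ∈ A, nb G H u + ∑ u ∈ R, nb G H u := by
    rw [← hARS, Finset.sum_union hAR]
  rw [Finset.sum_add_distrib] at hRsum
  have e5 := pr_le G R
  have e6 := pr_le G B
  have main : (t + 1) * (t + 2) ≤ 4 + 4 * A.card + 2 * R.card + R.card * (R.card - 1) := by omega
  by_cases ht1 : t ≤ 1
  · exact Or.inl ht1
  right
  have ht2 : t = 2 ∧ R.card = 0 := by
    generalize R.card = r at *
    generalize A.card = c at *
    subst hcard
    rcases r with _ | r
    · refine ⟨?_, rfl⟩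
      have : c + 0 ≤ 2 := by
        by_contra hc
        obtain ⟨e, rfl⟩ : ∃ e, c = e + 3 := ⟨c - 3, by omega⟩
        nlinarith
      omega
    · exfalso
      simp only [Nat.add_sub_cancel] at main
      have := Nat.zero_le (c * r)
      rcases c with _ | c
      · nlinarith
      · nlinarith
  have hRe : R = ∅ := Finset.card_eq_zero.1 ht2.2
  have hin : ∀ u ∉ H, u ∈ A := by
    intro u hu
    have : u ∈ A ∪ R := by rw [hARS, memS]; exact hu
    rw [hRe] at this
    simpa using this
  refine ⟨ht2.1, fun u hu => ((memA u).1 (hin u hu)).2, fun u hu v hv => ?_, ?_⟩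
  · have := (memA v).1 (hin v hv)
    exact noadj u (hin u hu) v hv (by omega)
  · have h12 : (t + 1) * (t + 2) = 12 := by rw [ht2.1]
    have hRR : R.card * (R.card - 1) = 0 := by rw [ht2.2]
    have hr := ht2.2
    have ht' := ht2.1
    omega

end CaseOne
end CaseOne

section Core
variable {V : Type}

/-- edges of `G` outside `H` -/
def outG (G : SimpleGraph V) (H : Finset V) : SimpleGraph V where
  Adj x y := G.Adj x y ∧ x ∉ H ∧ y ∉ H
  symm := ⟨fun _ _ h => ⟨h.1.symm, h.2.2, h.2.1⟩⟩
  loopless := ⟨fun x h => G.loopless.irrefl x h.1⟩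

lemma outG_path {G : SimpleGraph V} {H : Finset V} {u v : V} (hu : u ∉ H) (h : (outG G H).Reachable u v) :
    ∃ D, HP G D u v ∧ Disjoint H D := by
  obtain ⟨w, hw⟩ := h.exists_isPath
  refine ⟨w.support.toFinset, (HP.of_walk w hw).mono fun x _ y _ hxy => hxy.1, ?_⟩
  rw [Finset.disjoint_right]
  clear hw h
  induction w with
  | nil => simpa using hu
  | cons h p ih =>
    intro a ha
    simp only [SimpleGraph.Walk.support_cons, List.toFinset_cons, Finset.mem_insert] at ha
    rcases ha with rfl | ha
    · exact hu
    · exact ih h.2.2 ha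

def OutA (G : SimpleGraph V) (H : Finset V) : Prop :=
  ∀ u, u ∉ H → ∀ v, v ∉ H → (outG G H).Reachable u v → ∀ p ∈ H, ∀ q ∈ H,
    G.Adj u p → G.Adj v q → p = q

lemma two_nbrs (G : SimpleGraph V) {B : Finset V} {x : V} (h : nb G B x = 2) :
    ∃ a ∈ B, ∃ b ∈ B, a ≠ b ∧ G.Adj x a ∧ G.Adj x b ∧ ∀ y ∈ B, G.Adj x y → y = a ∨ y = b := by
  obtain ⟨a, b, hab, e⟩ := Finset.card_eq_two.1 (show (B.filter (G.Adj x)).card = 2 from h)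
  have hm : ∀ y, (y ∈ B ∧ G.Adj x y) ↔ y = a ∨ y = b := by
    intro y
    rw [← Finset.mem_filter, e]; simp
  have h1 := (hm a).2 (Or.inl rfl)
  have h2 := (hm b).2 (Or.inr rfl)
  exact ⟨a, h1.1, b, h2.1, hab, h1.2, h2.2, fun y hy hxy => (hm y).1 ⟨hy, hxy⟩⟩

lemma caseI [Fintype V] (G : SimpleGraph V) {n s : ℕ} (hs : 2 ≤ s) (hn : Fintype.card V = n)
    (h1 : 6 * s + 5 ≤ n)
    (hm : (n - s) * (n - s - 1) + s * (s + 1) ≤ pr G Finset.univ)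
    (hno : ∀ D, HC G D → D.card ≤ n - s + 1) {H : Finset V} (hH : H.card = n - s + 1)
    (hHm : H.card * (H.card - 1) ≤ pr G H + 2 * (H.card - 2)) (hdeg : ∀ v ∈ H, 2 ≤ nb G H v) :
    OutA G H ∨
    (s = 2 ∧ ∃ P I : Finset V, P.card = 2 ∧ I.card = 2 ∧ Disjoint P I ∧
      ∀ u v, G.Adj u v → u ∈ P ∨ v ∈ P ∨ (u ∉ I ∧ v ∉ I)) ∨
    (s = 3 ∧ ∃ P I : Finset V, P.card = 2 ∧ I.card = 3 ∧ Disjoint P I ∧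
      ∀ u v, G.Adj u v ↔ u ≠ v ∧ (u ∈ P ∨ v ∈ P ∨ (u ∉ I ∧ v ∉ I))) := by
  by_cases hA : OutA G H
  · exact Or.inl hA
  right
  unfold OutA at hA
  push Not at hA
  obtain ⟨u, hu, v, hv, hr, p, hp, q, hq, hup, hvq, hpq⟩ := hA
  obtain ⟨D, hD, hdis⟩ := outG_path hu hr
  have hnP : ¬ HP G H p q := by
    intro hP
    obtain ⟨k1, k2⟩ := HC_join hP.symm hD hdis hup.symm hvq (by omega)
    have := hno _ k1
    have := Finset.card_pos.2 ⟨_, hD.left_mem⟩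
    omega
  obtain ⟨x, hx, hx2, hB⟩ := find_x G (by omega) hHm hdeg hu hp hq hpq hnP
  set B := H.erase x with hBdef
  have hxB : x ∉ B := Finset.notMem_erase x H
  have hins : insert x B = H := Finset.insert_erase hx
  have hBx2 : nb G B x = 2 := by rw [← nb_insert_self, hins, hx2]
  have hBc : B.card = n - s := by
    have := Finset.card_erase_add_one hx
    rw [← hBdef] at this
    omega
  obtain ⟨a, ha, b, hb, hab, hxa, hxb, hxall⟩ := two_nbrs G hBx2
  have C : CaseOne G B x a b := ⟨by omega, hB, hxB, ha, hb, hab, hxa, hxb, hBx2, by rwa [hBc]⟩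
  have haH : a ∈ H := Finset.mem_of_mem_erase ha
  have hbH : b ∈ H := Finset.mem_of_mem_erase hb
  have hxne : x ≠ a ∧ x ≠ b := ⟨hxa.ne, hxb.ne⟩
  have ht : (Finset.univ \ insert x B).card = s - 1 := by
    rw [hins, Finset.card_sdiff_of_subset (Finset.subset_univ H), Finset.card_univ, hn]
    omega
  have hdP : ∀ S : Finset V, (∀ y ∈ S, y ∉ H) → Disjoint ({a, b} : Finset V) (insert x S) := by
    intro S hS
    rw [Finset.disjoint_left]
    intro y hy hy'
    simp only [Finset.mem_insert, Finset.mem_singleton] at hy hy'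
    rcases hy' with rfl | hy'
    · exact hy.elim hxne.1 hxne.2
    · rcases hy with rfl | rfl
      · exact hS _ hy' haH
      · exact hS _ hy' hbH
  rcases C.count ht (by
      have e1 : s - 1 + 1 = s := by omega
      have e2 : s - 1 + 2 = s + 1 := by omega
      rw [hBc, e1, e2]; exact hm) with hc | ⟨ht2, hall, hind, hBcomp⟩
  · left
    have hs2 : s = 2 := by omega
    refine ⟨hs2, ?_⟩
    rw [hins] at ht
    obtain ⟨y, hy⟩ := Finset.card_eq_one.1 (show (Finset.univ \ H).card = 1 by omega)
    have hmem : ∀ z, z ∉ H ↔ z = y := by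
      intro z
      have : z ∈ Finset.univ \ H ↔ z ∈ ({y} : Finset V) := by rw [hy]
      simpa using this
    obtain rfl := (hmem u).1 hu
    obtain rfl := (hmem v).1 hv
    have h2 : 2 ≤ nb G (insert x B) v := by
      rw [hins]
      exact Finset.one_lt_card.2 ⟨p, Finset.mem_filter.2 ⟨hp, hup⟩, q, Finset.mem_filter.2 ⟨hq, hvq⟩, hpq⟩
    have hatt := C.att (by rwa [hins]) h2
    rw [hins] at hatt
    have hxv : x ≠ v := fun e => hu (e ▸ hx)
    refine ⟨{a, b}, {x, v}, Finset.card_pair hab, Finset.card_pair hxv, hdP {v} (by simpa using hv), ?_⟩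
    -- neighbours of x or v are in {a,b}
    have key : ∀ z w, (z = x ∨ z = v) → G.Adj z w → w = a ∨ w = b := by
      rintro z w (rfl | rfl) hzw
      · by_cases hw : w ∈ H
        · exact hxall w (Finset.mem_erase.2 ⟨hzw.ne.symm, hw⟩) hzw
        · obtain rfl := (hmem w).1 hw
          rcases hatt.2.2.1 z hx hzw.symm with e | e
          · exact absurd e hxne.1
          · exact absurd e hxne.2
      · by_cases hw : w ∈ H
        · exact hatt.2.2.1 w hw hzw
        · exact absurd ((hmem w).1 hw).symm hzw.ne
    intro z w hzw
    simp only [Finset.mem_insert, Finset.mem_singleton]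
    by_cases hz : z = x ∨ z = v
    · exact Or.inr (Or.inl (key z w hz hzw))
    by_cases hw : w = x ∨ w = v
    · exact Or.inl (key w z hw hzw.symm)
    exact Or.inr (Or.inr ⟨hz, hw⟩)
  · right
    have hs3 : s = 3 := by omega
    refine ⟨hs3, {a, b}, insert x (Finset.univ \ H), Finset.card_pair hab, ?_,
      hdP _ (by simp), ?_⟩
    · rw [Finset.card_insert_of_notMem (by simp [hx])]
      rw [hins] at ht
      omega
    rw [hins] at hall hind
    have hcomp := complete_of_pr G hBcomp
    have memI : ∀ z, z ∈ insert x (Finset.univ \ H) ↔ z = x ∨ z ∉ H := by intro z; simp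
    have memB : ∀ z, ¬ (z = x ∨ z ∉ H) → z ∈ B := by
      intro z hz
      push Not at hz
      exact Finset.mem_erase.2 ⟨hz.1, hz.2⟩
    have hatt : ∀ z, z ∉ H → G.Adj z a ∧ G.Adj z b ∧ ∀ y ∈ H, G.Adj z y → y = a ∨ y = b := by
      intro z hz
      have := C.att (u := z) (by rwa [hins]) (by rw [hins]; exact hall z hz)
      rw [hins] at this
      exact ⟨this.1, this.2.1, this.2.2.1⟩
    have key : ∀ z w, (z = x ∨ z ∉ H) → G.Adj z w → w = a ∨ w = b := by
      rintro z w (rfl | hz) hzw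
      · by_cases hw : w ∈ H
        · exact hxall w (Finset.mem_erase.2 ⟨hzw.ne.symm, hw⟩) hzw
        · rcases (hatt w hw).2.2 z hx hzw.symm with e | e
          · exact absurd e hxne.1
          · exact absurd e hxne.2
      · by_cases hw : w ∈ H
        · exact (hatt z hz).2.2 w hw hzw
        · exact absurd hzw (hind z hz w hw)
    have univ' : ∀ z w, (z = a ∨ z = b) → z ≠ w → G.Adj z w := by
      intro z w hz hzw
      have hzB : z ∈ B := by rcases hz with rfl | rfl; exacts [ha, hb]
      by_cases hw : w = x ∨ w ∉ H
      · rcases hw with rfl | hw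
        · rcases hz with rfl | rfl; exacts [hxa.symm, hxb.symm]
        · rcases hz with rfl | rfl; exacts [(hatt w hw).1.symm, (hatt w hw).2.1.symm]
      · exact hcomp z hzB w (memB w hw) hzw
    intro z w
    simp only [memI]
    simp only [Finset.mem_insert, Finset.mem_singleton]
    constructor
    · intro hzw
      refine ⟨hzw.ne, ?_⟩
      by_cases hz : z = x ∨ z ∉ H
      · exact Or.inr (Or.inl (key z w hz hzw))
      by_cases hw : w = x ∨ w ∉ H
      · exact Or.inl (key w z hw hzw.symm)
      exact Or.inr (Or.inr ⟨hz, hw⟩)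
    · rintro ⟨hne, h | h | ⟨hz, hw⟩⟩
      · exact univ' z w h hne
      · exact (univ' w z h hne.symm).symm
      · exact hcomp z (memB z hz) w (memB w hw) hne

lemma core [Fintype V] (G : SimpleGraph V) {n s : ℕ} (hs : 2 ≤ s) (hn : Fintype.card V = n)
    (h1 : 6 * s + 5 ≤ n) (h2 : (s + 2) * (s + 3) ≤ 2 * n)
    (hm : n * (n - 1) ≤ pr G Finset.univ + 2 * (s * (n - s - 1)))
    (hno : ∀ D, HC G D → D.card ≤ n - s + 1) :
    (∃ H : Finset V, H.card = n - s + 1 ∧ OutA G H) ∨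
    (∃ (K : Finset V) (a : V), K.card = n - s ∧ a ∈ K ∧
      ∀ x y, G.Adj x y ↔ x ≠ y ∧ (x = a ∨ y = a ∨ (x ∈ K ∧ y ∈ K) ∨ (x ∉ K ∧ y ∉ K))) ∨
    (s = 2 ∧ ∃ P I : Finset V, P.card = 2 ∧ I.card = 2 ∧ Disjoint P I ∧
      ∀ u v, G.Adj u v → u ∈ P ∨ v ∈ P ∨ (u ∉ I ∧ v ∉ I)) ∨
    (s = 3 ∧ ∃ P I : Finset V, P.card = 2 ∧ I.card = 3 ∧ Disjoint P I ∧
      ∀ u v, G.Adj u v ↔ u ≠ v ∧ (u ∈ P ∨ v ∈ P ∨ (u ∉ I ∧ v ∉ I))) := by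
  have hm' : (n - s) * (n - s - 1) + s * (s + 1) ≤ pr G Finset.univ := by
    obtain ⟨e, rfl⟩ : ∃ e, n = s + 1 + e := ⟨n - s - 1, by omega⟩
    have e1 : s + 1 + e - s = e + 1 := by omega
    have e3 : s + 1 + e - 1 = s + e := by omega
    rw [e1] at hm ⊢
    rw [e3] at hm
    simp only [Nat.add_sub_cancel] at hm ⊢
    nlinarith
  obtain ⟨j, r, W, hjr, hWc, hWm, hdeg, hW⟩ := peel_main G hn h1 h2 hm
  have hle := hno W hW
  have hr : r = 0 ∨ r = 1 := by omega
  rcases hr with rfl | rfl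
  · obtain rfl : j = s := by omega
    rw [← hWc] at hWm
    have hWm : W.card * (W.card - 1) ≤ pr G W := by simpa using hWm
    have hcomp := complete_of_pr G hWm
    by_cases hex : ∃ v, v ∉ W ∧ 2 ≤ nb G W v
    · obtain ⟨v, hv, hv2⟩ := hex
      have hc := Finset.card_insert_of_notMem hv
      have q1 : (insert v W).card * ((insert v W).card - 1) ≤
          pr G (insert v W) + 2 * ((insert v W).card - 2) := by
        rw [pr_insert G hv, hc]
        obtain ⟨e, he⟩ : ∃ e, W.card = e + 1 := ⟨W.card - 1, by omega⟩
        rw [he] at hWm ⊢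
        have e1 : e + 1 + 1 - 1 = e + 1 := rfl
        have e2 : e + 1 + 1 - 2 = e := rfl
        have e3 : e + 1 - 1 = e := rfl
        rw [e1, e2]
        rw [e3] at hWm
        nlinarith
      have q2 : ∀ y ∈ insert v W, 2 ≤ nb G (insert v W) y := by
        intro y hy
        rcases Finset.mem_insert.1 hy with rfl | hy
        · rwa [nb_insert_self]
        · have := nb_lower G (c := 0) (by simpa using hWm) hy
          have := nb_mono G (Finset.subset_insert v W) y
          omega
      rcases caseI G hs hn h1 hm' hno (H := insert v W) (by omega) q1 q2 with h | h
      · exact Or.inl ⟨insert v W, by omega, h⟩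
      · exact Or.inr (Or.inr h)
    · push Not at hex
      right; left
      set S := Finset.univ \ W with hS
      have memS : ∀ u, u ∈ S ↔ u ∉ W := by simp [hS]
      have hSc : S.card = j := by
        rw [hS, Finset.card_sdiff_of_subset (Finset.subset_univ W), Finset.card_univ, hn]
        omega
      have e1 := pr_union G (A := W) (B := S) Finset.disjoint_sdiff
      rw [Finset.union_sdiff_of_subset (Finset.subset_univ W)] at e1
      have e2 := pr_le G W
      have e3 := pr_le G S
      have hsum : ∑ v ∈ S, nb G W v ≤ S.card := by
        have := Finset.sum_le_card_nsmul S (fun v => nb G W v) 1 fun v hv => by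
          have := hex v ((memS v).1 hv); omega
        simpa using this
      rw [hWc] at e2
      rw [hSc] at e3 hsum
      have e4 : j * (j + 1) = j * (j - 1) + 2 * j := by
        obtain ⟨c, rfl⟩ : ∃ c, j = c + 1 := ⟨j - 1, by omega⟩
        simp only [Nat.add_sub_cancel]; ring
      have hScomp := complete_of_pr G (W := S) (by rw [hSc]; omega)
      have hone : ∀ v, v ∉ W → nb G W v = 1 := by
        intro v hv
        by_contra hne
        have h0 : nb G W v = 0 := by have := hex v hv; omega
        have : ∑ v ∈ S, nb G W v < ∑ v ∈ S, 1 := Finset.sum_lt_sum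
          (fun y hy => by have := hex y ((memS y).1 hy); omega) ⟨v, (memS v).2 hv, by omega⟩
        simp at this
        omega
      have hatt : ∀ v, v ∉ W → ∃ a ∈ W, G.Adj v a ∧ ∀ y ∈ W, G.Adj v y → y = a := by
        intro v hv
        obtain ⟨a, ha⟩ := Finset.card_eq_one.1 (show (W.filter (G.Adj v)).card = 1 from hone v hv)
        have hm : ∀ y, (y ∈ W ∧ G.Adj v y) ↔ y = a := by
          intro y; rw [← Finset.mem_filter, ha]; simp
        have := (hm a).2 rfl
        exact ⟨a, this.1, this.2, fun y hy hvy => (hm y).1 ⟨hy, hvy⟩⟩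
      obtain ⟨u, huS⟩ := Finset.card_pos.1 (show 0 < S.card by omega)
      have hu := (memS u).1 huS
      obtain ⟨a, haW, hua, huall⟩ := hatt u hu
      have hall : ∀ v, v ∉ W → G.Adj v a ∧ ∀ y ∈ W, G.Adj v y → y = a := by
        intro v hv
        obtain ⟨b, hbW, hvb, hvall⟩ := hatt v hv
        suffices b = a by subst this; exact ⟨hvb, hvall⟩
        by_contra hba
        have huv : u ≠ v := by
          rintro rfl
          exact hba (huall b hbW hvb)
        have hadj := hScomp u huS v ((memS v).2 hv) huv
        have hP := HP_almost G (B := W) (by omega) (by omega) hu hbW haW hba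
        have hd : Disjoint W {u, v} := by
          rw [Finset.disjoint_right]
          intro y hy; simp at hy; rcases hy with rfl | rfl; exacts [hu, hv]
        obtain ⟨k1, k2⟩ := HC_join hP (CaseOne.HP_pair hadj) hd hua.symm hvb (by omega)
        have := hno _ k1
        rw [Finset.card_pair huv] at k2
        omega
      refine ⟨W, a, hWc, haW, fun x y => ⟨fun hxy => ⟨hxy.ne, ?_⟩, ?_⟩⟩
      · by_cases hx : x ∈ W <;> by_cases hy : y ∈ W
        · exact Or.inr (Or.inr (Or.inl ⟨hx, hy⟩))
        · exact Or.inl ((hall y hy).2 x hx hxy.symm)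
        · exact Or.inr (Or.inl ((hall x hx).2 y hy hxy))
        · exact Or.inr (Or.inr (Or.inr ⟨hx, hy⟩))
      · have ua : ∀ y, a ≠ y → G.Adj a y := by
          intro y hy
          by_cases hyW : y ∈ W
          · exact hcomp a haW y hyW hy
          · exact (hall y hyW).1.symm
        rintro ⟨hne, rfl | rfl | ⟨hx, hy⟩ | ⟨hx, hy⟩⟩
        · exact ua y hne
        · exact (ua x hne.symm).symm
        · exact hcomp x hx y hy hne
        · exact hScomp x ((memS x).2 hx) y ((memS y).2 hy) hne
  · have hWc' : W.card = n - s + 1 := by omega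
    have q1 : W.card * (W.card - 1) ≤ pr G W + 2 * (W.card - 2) := by
      rw [hWc]
      have : n - j - 2 = n - s - 1 := by omega
      rw [this]; simpa using hWm
    have q2 : ∀ y ∈ W, 2 ≤ nb G W y := by simpa using hdeg
    rcases caseI G hs hn h1 hm' hno hWc' q1 q2 with h | h
    · exact Or.inl ⟨W, hWc', h⟩
    · exact Or.inr (Or.inr h)

end Core

section Transfer

lemma exists_perm {V : Type} [Fintype V] {P I P' I' : Finset V} (h : Disjoint P I)
    (h' : Disjoint P' I') (hP : P.card = P'.card) (hI : I.card = I'.card) :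
    ∃ e : V ≃ V, (∀ x, x ∈ P ↔ e x ∈ P') ∧ (∀ x, x ∈ I ↔ e x ∈ I') := by
  let col : Finset V → Finset V → V → Fin 3 := fun A B x => if x ∈ A then 0 else if x ∈ B then 1 else 2
  have c0 : ∀ A B x, col A B x = 0 ↔ x ∈ A := by
    intro A B x; simp only [col]; split_ifs <;> simp_all
  have c1 : ∀ A B x, Disjoint A B → (col A B x = 1 ↔ x ∈ B) := by
    intro A B x hAB
    have hx : x ∈ A → x ∉ B := fun h => Finset.disjoint_left.1 hAB h
    simp only [col]; split_ifs <;> simp_all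
  have c2 : ∀ A B x, (col A B x = 2 ↔ x ∈ Finset.univ \ (A ∪ B)) := by
    intro A B x
    simp only [col]; split_ifs <;> simp_all
  have fib : ∀ c : Fin 3, Nonempty ({x // col P I x = c} ≃ {x // col P' I' x = c}) := by
    intro c
    rw [← Fintype.card_eq]
    rw [Fintype.card_subtype, Fintype.card_subtype]
    have hc : c = 0 ∨ c = 1 ∨ c = 2 := by revert c; decide
    rcases hc with rfl | rfl | rfl
    · simp only [c0]; simpa using hP
    · simp only [c1 _ _ _ h, c1 _ _ _ h']; simpa using hI
    · simp only [c2]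
      rw [Finset.filter_mem_eq_inter, Finset.filter_mem_eq_inter, Finset.univ_inter,
        Finset.univ_inter, Finset.card_sdiff_of_subset (Finset.subset_univ _),
        Finset.card_sdiff_of_subset (Finset.subset_univ _), Finset.card_union_of_disjoint h,
        Finset.card_union_of_disjoint h', hP, hI]
  let e : V ≃ V := Equiv.ofFiberEquiv (f := col P I) (g := col P' I') fun c => (fib c).some
  have he : ∀ x, col P' I' (e x) = col P I x := fun x => Equiv.ofFiberEquiv_map _ x
  refine ⟨e, fun x => ?_, fun x => ?_⟩
  · rw [← c0 P I, ← c0 P' I', he]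
  · rw [← c1 P I x h, ← c1 P' I' _ h', he]

lemma exists_perm_fin {n i t : ℕ} (hit : i + t ≤ n) {P I : Finset (Fin n)} (h : Disjoint P I)
    (hP : P.card = i) (hI : I.card = t) :
    ∃ e : Fin n ≃ Fin n, (∀ x, x ∈ P ↔ (e x).val < i) ∧ (∀ x, x ∈ I ↔ n - t ≤ (e x).val) := by
  have k1 : ((Finset.univ : Finset (Fin n)).filter fun x => x.val < i).card = i := by
    have e : (Finset.univ : Finset (Fin n)).filter (fun x => x.val < i) =
        Finset.univ.map (Fin.castLEEmb (show i ≤ n by omega)) := by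
      ext x
      simp only [Finset.mem_filter, Finset.mem_univ, true_and, Finset.mem_map]
      exact ⟨fun hx => ⟨⟨x.val, hx⟩, rfl⟩, fun ⟨y, hy⟩ => hy ▸ y.2⟩
    rw [e, Finset.card_map, Finset.card_univ, Fintype.card_fin]
  have k2 : ((Finset.univ : Finset (Fin n)).filter fun x => n - t ≤ x.val).card = t := by
    have e : (Finset.univ : Finset (Fin n)).filter (fun x => n - t ≤ x.val) =
        Finset.univ \ Finset.univ.map (Fin.castLEEmb (show n - t ≤ n by omega)) := by
      ext x
      simp only [Finset.mem_filter, Finset.mem_univ, true_and, Finset.mem_map, Finset.mem_sdiff]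
      constructor
      · rintro hx ⟨y, rfl⟩
        have := y.2
        simp at hx
        omega
      · intro hx
        by_contra hlt
        exact hx ⟨⟨x.val, by omega⟩, rfl⟩
    rw [e, Finset.card_sdiff_of_subset (Finset.subset_univ _), Finset.card_map, Finset.card_univ,
      Finset.card_univ, Fintype.card_fin, Fintype.card_fin]
    omega
  obtain ⟨e, e1, e2⟩ := exists_perm (P' := Finset.univ.filter fun x : Fin n => x.val < i)
    (I' := Finset.univ.filter fun x : Fin n => n - t ≤ x.val) h
    (by rw [Finset.disjoint_left]; intro x; simp; omega) (hP.trans k1.symm) (hI.trans k2.symm)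
  exact ⟨e, by simpa using e1, by simpa using e2⟩

lemma gamma_adj {n t : ℕ} (u v : Fin n) : (GammaGraph n t).Adj u v ↔
    u ≠ v ∧ (u.val < 2 ∨ v.val < 2 ∨ (u.val < n - t ∧ v.val < n - t)) := by
  unfold GammaGraph
  rw [SimpleGraph.fromRel_adj]
  tauto

lemma L_adj {n k : ℕ} (u v : Fin n) : (Lgraph n k).Adj u v ↔
    u ≠ v ∧ (u.val = 0 ∨ v.val = 0 ∨ (u.val < n - k ∧ v.val < n - k) ∨
      (n - k ≤ u.val ∧ n - k ≤ v.val)) := by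
  unfold Lgraph
  rw [SimpleGraph.fromRel_adj]
  tauto

lemma gamma_sub {n t : ℕ} (hn : 2 + t ≤ n) (G : SimpleGraph (Fin n)) {P I : Finset (Fin n)}
    (hP : P.card = 2) (hI : I.card = t) (hd : Disjoint P I)
    (h : ∀ u v, G.Adj u v → u ∈ P ∨ v ∈ P ∨ (u ∉ I ∧ v ∉ I)) : IsSubgraphOf G (GammaGraph n t) := by
  obtain ⟨e, e1, e2⟩ := exists_perm_fin hn hd hP hI
  refine ⟨⟨e, fun {u v} huv => ?_⟩, e.injective⟩
  rw [gamma_adj]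
  refine ⟨fun hh => huv.ne (e.injective hh), ?_⟩
  have := h u v huv
  rw [e1, e1, e2, e2] at this
  omega

lemma gamma_iso {n t : ℕ} (hn : 2 + t ≤ n) (G : SimpleGraph (Fin n)) {P I : Finset (Fin n)}
    (hP : P.card = 2) (hI : I.card = t) (hd : Disjoint P I)
    (h : ∀ u v, G.Adj u v ↔ u ≠ v ∧ (u ∈ P ∨ v ∈ P ∨ (u ∉ I ∧ v ∉ I))) :
    Nonempty (G ≃g GammaGraph n t) := by
  obtain ⟨e, e1, e2⟩ := exists_perm_fin hn hd hP hI
  refine ⟨⟨e, fun {u v} => ?_⟩⟩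
  rw [gamma_adj, h, e1, e1, e2, e2, not_le, not_le, ne_eq, e.apply_eq_iff_eq]

lemma L_iso {n s : ℕ} (hn : 1 + s ≤ n) (G : SimpleGraph (Fin n)) {K : Finset (Fin n)} {a : Fin n}
    (hK : K.card = n - s) (ha : a ∈ K)
    (h : ∀ x y, G.Adj x y ↔ x ≠ y ∧ (x = a ∨ y = a ∨ (x ∈ K ∧ y ∈ K) ∨ (x ∉ K ∧ y ∉ K))) :
    Nonempty (G ≃g Lgraph n s) := by
  obtain ⟨e, e1, e2⟩ := exists_perm_fin (n := n) (i := 1) (t := s) hn (P := {a})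
    (I := Finset.univ \ K) (by simpa using ha) (by simp)
    (by rw [Finset.card_sdiff_of_subset (Finset.subset_univ _), Finset.card_univ, Fintype.card_fin]
        omega)
  have e1' : ∀ x, x = a ↔ (e x).val = 0 := by intro x; rw [← Finset.mem_singleton, e1]; omega
  have e2' : ∀ x, x ∉ K ↔ n - s ≤ (e x).val := by intro x; rw [← e2]; simp
  have e3' : ∀ x, x ∈ K ↔ (e x).val < n - s := by intro x; rw [← not_le, ← e2', not_not]
  refine ⟨⟨e, fun {u v} => ?_⟩⟩
  rw [L_adj, h, e1', e1', e2', e2', e3', e3', ne_eq, e.apply_eq_iff_eq]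

lemma memF_of {n k : ℕ} (G : SimpleGraph (Fin n)) {H : Finset (Fin n)} (hH : H.card = n - k)
    (hne : H.Nonempty) (hA : OutA G H) : ∃ F, MemF n k F ∧ IsSubgraphOf G F := by
  obtain ⟨h0, hh0⟩ := hne
  let Q : (outG G H).ConnectedComponent → Fin n → Prop := fun C p =>
    p ∈ H ∧ ∃ v, v ∉ H ∧ (outG G H).connectedComponentMk v = C ∧ G.Adj v p
  let f : (outG G H).ConnectedComponent → Fin n := fun C => if h : ∃ p, Q C p then h.choose else h0
  let anc : Fin n → Fin n := fun u => f ((outG G H).connectedComponentMk u)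
  have hf : ∀ C, f C ∈ H := by
    intro C
    by_cases h : ∃ p, Q C p
    · simp only [f, dif_pos h]; exact h.choose_spec.1
    · simp only [f, dif_neg h]; exact hh0
  have anc_mem : ∀ u, anc u ∈ H := fun u => hf _
  have anc_eq : ∀ u v, (outG G H).Reachable u v → anc u = anc v := by
    intro u v h
    simp only [anc, SimpleGraph.ConnectedComponent.sound h]
  have anc_adj : ∀ u, u ∉ H → ∀ p ∈ H, G.Adj u p → p = anc u := by
    intro u hu p hp hup
    have h : ∃ p, Q ((outG G H).connectedComponentMk u) p := ⟨p, hp, u, hu, rfl, hup⟩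
    have e : anc u = h.choose := by simp only [anc, f, dif_pos h]
    obtain ⟨hq, v, hv, hvu, hvq⟩ := h.choose_spec
    rw [← e] at hq hvq
    exact hA u hu v hv (SimpleGraph.ConnectedComponent.exact hvu).symm p hp _ hq hup hvq
  let F : SimpleGraph (Fin n) :=
    { Adj := fun x y => x ≠ y ∧ ((x ∈ H ∧ y ∈ H) ∨ (x ∉ H ∧ y ∉ H ∧ (outG G H).Reachable x y) ∨
        (x ∉ H ∧ y = anc x) ∨ (y ∉ H ∧ x = anc y))
      symm := ⟨fun x y h => ⟨h.1.symm, by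
        rcases h.2 with h | h | h | h
        · exact Or.inl ⟨h.2, h.1⟩
        · exact Or.inr (Or.inl ⟨h.2.1, h.1, h.2.2.symm⟩)
        · exact Or.inr (Or.inr (Or.inr h))
        · exact Or.inr (Or.inr (Or.inl h))⟩⟩
      loopless := ⟨fun x h => h.1 rfl⟩ }
  have F_adj : ∀ x y, F.Adj x y ↔ x ≠ y ∧ ((x ∈ H ∧ y ∈ H) ∨
    (x ∉ H ∧ y ∉ H ∧ (outG G H).Reachable x y) ∨
        (x ∉ H ∧ y = anc x) ∨ (y ∉ H ∧ x = anc y)) := fun x y => Iff.rfl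
  have F_out : ∀ x y, x ∉ H → y ∉ H → F.Adj x y → (outG G H).Reachable x y := by
    intro x y hx hy h
    rcases ((F_adj x y).1 h).2 with h | h | h | h
    · exact absurd h.1 hx
    · exact h.2.2
    · exact absurd (h.2 ▸ anc_mem x) hy
    · exact absurd (h.2 ▸ anc_mem y) hx
  have F_anc : ∀ x y, x ∉ H → y ∈ H → (F.Adj x y ↔ y = anc x) := by
    intro x y hx hy
    rw [F_adj]
    constructor
    · rintro ⟨-, h | h | h | h⟩
      · exact absurd h.1 hx
      · exact absurd hy h.2.1
      · exact h.2
      · exact absurd hy h.1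
    · intro e
      exact ⟨fun h => hx (h ▸ hy), Or.inr (Or.inr (Or.inl ⟨hx, e⟩))⟩
  have reach : ∀ u v : ({x : Fin n | x ∉ H} : Set (Fin n)),
      (F.induce {x : Fin n | x ∉ H}).Reachable u v → (outG G H).Reachable u.1 v.1 := by
    rintro u v ⟨w⟩
    induction w with
    | nil => exact SimpleGraph.Reachable.refl _
    | @cons a b c h p ih => exact (F_out a.1 b.1 a.2 b.2 h).trans ih
  refine ⟨F, ⟨H, hH, ?_, ?_, ?_, ?_⟩, ⟨⟨id, fun {x y} hxy => ?_⟩, Function.injective_id⟩⟩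
  · intro x hx y hy hxy
    exact (F_adj x y).2 ⟨hxy, Or.inl ⟨hx, hy⟩⟩
  · intro u v h
    by_cases e : u = v
    · exact Or.inl e
    · right
      exact (F_adj _ _).2 ⟨fun h => e (Subtype.ext h), Or.inr (Or.inl ⟨u.2, v.2, reach u v h⟩)⟩
  · intro u
    refine ⟨anc u.1, ⟨anc_mem _, (F_anc _ _ u.2 (anc_mem _)).2 rfl⟩, ?_⟩
    rintro y ⟨hy, hy'⟩
    exact (F_anc _ _ u.2 hy).1 hy'
  · intro u v h w hw huw
    rw [F_anc _ _ u.2 hw] at huw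
    rw [F_anc _ _ v.2 hw, huw]
    exact anc_eq _ _ (reach u v h)
  · change F.Adj x y
    rw [F_adj]
    refine ⟨hxy.ne, ?_⟩
    by_cases hx : x ∈ H <;> by_cases hy : y ∈ H
    · exact Or.inl ⟨hx, hy⟩
    · exact Or.inr (Or.inr (Or.inr ⟨hy, anc_adj y hy x hx hxy.symm⟩))
    · exact Or.inr (Or.inr (Or.inl ⟨hx, anc_adj x hx y hy hxy⟩))
    · exact Or.inr (Or.inl ⟨hx, hy, SimpleGraph.Adj.reachable (G := outG G H) ⟨hxy, hx, hy⟩⟩)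

lemma pr_univ {V : Type} [Fintype V] (G : SimpleGraph V) : pr G Finset.univ = 2 * edgeCount G := by
  have := G.sum_degrees_eq_twice_card_edges
  unfold edgeCount
  rw [Nat.card_eq_fintype_card, ← SimpleGraph.edgeFinset_card, ← this]
  unfold pr nb
  refine Finset.sum_congr rfl fun v _ => ?_
  rw [← SimpleGraph.card_neighborFinset_eq_degree]
  congr 1
  ext y
  simp

lemma two_choose (m : ℕ) : 2 * m.choose 2 = m * (m - 1) := by
  rw [Nat.choose_two_right, Nat.mul_div_cancel' (Nat.even_mul_pred_self m).two_dvd]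

lemma woodall_main {k n : ℕ} (G : SimpleGraph (Fin n))
    (hn1 : 6 * k + 17 ≤ n) (hn2 : (k + 4) * (k + 5) / 2 ≤ n)
    (he : (n - k - 2).choose 2 + (k + 3).choose 2 ≤ edgeCount G) :
    WeaklyPancyclic3 G ∧
      (¬ HasCycleLen G (n - k) →
        (∃ F : SimpleGraph (Fin n), MemF n (k + 1) F ∧ IsSubgraphOf G F) ∨
        Nonempty (G ≃g Lgraph n (k + 2)) ∨
        (k = 0 ∧ IsSubgraphOf G (GammaGraph n 2)) ∨
        (k = 1 ∧ Nonempty (G ≃g GammaGraph n 3))) := by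
  have hcard : Fintype.card (Fin n) = n := Fintype.card_fin n
  have h1 : 6 * (k + 2) + 5 ≤ n := by omega
  have h2 : (k + 2 + 2) * (k + 2 + 3) ≤ 2 * n := by
    have : 2 ∣ (k + 4) * (k + 5) := (Nat.even_mul_succ_self (k + 4)).two_dvd
    change (k + 4) * (k + 5) ≤ 2 * n
    omega
  have hm : n * (n - 1) ≤ pr G Finset.univ + 2 * ((k + 2) * (n - (k + 2) - 1)) := by
    rw [pr_univ]
    have c1 := two_choose (n - k - 2)
    have c2 := two_choose (k + 3)
    obtain ⟨e, rfl⟩ : ∃ e, n = k + 3 + e := ⟨n - k - 3, by omega⟩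
    have a1 : k + 3 + e - k - 2 = e + 1 := by omega
    have a2 : k + 3 + e - (k + 2) - 1 = e := by omega
    have a3 : k + 3 + e - 1 = k + 2 + e := by omega
    have a4 : k + 3 - 1 = k + 2 := by omega
    rw [a1] at c1 he
    rw [a4] at c2
    rw [a2, a3]
    simp only [Nat.add_sub_cancel] at c1
    nlinarith
  obtain ⟨j, r, W, hjr, hWc, -, -, hW⟩ := peel_main G hcard h1 h2 hm
  have hbdd : BddAbove {l | HasCycleLen G l} := by
    refine ⟨n, fun l hl => ?_⟩
    obtain ⟨D, -, rfl⟩ := HasCycleLen.exists_HC hl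
    simpa using Finset.card_le_univ D
  have hmemW : HasCycleLen G W.card := hW.hasCycleLen
  have hmem : HasCycleLen G (circumference G) := Nat.sSup_mem ⟨_, hmemW⟩ hbdd
  have hge : W.card ≤ circumference G := le_csSup hbdd hmemW
  obtain ⟨M, hM, hMc⟩ := hmem.exists_HC
  have hwp : ∀ l, 3 ≤ l → l ≤ circumference G → HasCycleLen G l := by
    intro l hl hlc
    obtain ⟨D, hD, rfl⟩ := weakly G hcard h1 hm hM (by omega) hl (by omega)
    exact hD.hasCycleLen
  refine ⟨⟨hwp 3 le_rfl (by omega), hwp⟩, fun hno => ?_⟩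
  have hno' : ∀ D, HC G D → D.card ≤ n - (k + 2) + 1 := by
    intro D hD
    by_contra hlt
    have : D.card ≤ circumference G := le_csSup hbdd hD.hasCycleLen
    exact hno (hwp (n - k) (by omega) (by omega))
  rcases core G (by omega) hcard h1 h2 hm hno' with ⟨H, hH, hA⟩ | ⟨K, a, hK, ha, h⟩ |
    ⟨hs, P, I, hP, hI, hd, h⟩ | ⟨hs, P, I, hP, hI, hd, h⟩
  · exact Or.inl (memF_of G (by omega) (Finset.card_pos.1 (by omega)) hA)
  · exact Or.inr (Or.inl (L_iso (by omega) G hK ha h))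
  · exact Or.inr (Or.inr (Or.inl ⟨by omega, gamma_sub (by omega) G hP hI hd h⟩))
  · exact Or.inr (Or.inr (Or.inr ⟨by omega, gamma_iso (by omega) G hP hI hd h⟩))

end Transfer
end Aux

/-- Stability version of Woodall's theorem (Theorem 1.4). -/
theorem woodall_stability (k n : ℕ) (G : SimpleGraph (Fin n))
    (hn1 : 6 * k + 17 ≤ n) (hn2 : (k + 4) * (k + 5) / 2 ≤ n)
    (he : (n - k - 2).choose 2 + (k + 3).choose 2 ≤ edgeCount G) :
    WeaklyPancyclic3 G ∧
      (¬ HasCycleLen G (n - k) →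
        (∃ F : SimpleGraph (Fin n), MemF n (k + 1) F ∧ IsSubgraphOf G F) ∨
        Nonempty (G ≃g Lgraph n (k + 2)) ∨
        (k = 0 ∧ IsSubgraphOf G (GammaGraph n 2)) ∨
        (k = 1 ∧ Nonempty (G ≃g GammaGraph n 3))) := by
  exact woodall_main G hn1 hn2 he
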